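/- Let f be a rational map of degree at least 2 with Julia set J. If Λ ⊂ J is an f-invariant compact uniformly expanding set that is a Cantor set, then Λ is contained in the limit set of a graph directed system satisfying the strong separation condition with respect to f, and this limit set can be chosen to lie in an arbitrarily small neighborhood of Λ. In particular, Λ is contained in an f-expanding Cantor repeller. -/

import Mathlib

open Filter Set Metric MeasureTheory Topology
open scoped ENNReal NNReal

noncomputable section

/-! ### The Riemann sphere with the chordal (spherical) metric -/

/-- The Riemann sphere `ℂ ∪ {∞}`. -/
structure RSphere : Type where
  val : Option ℂ

namespace RSphere

/-- The inclusion of `ℂ` into the Riemann sphere. -/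
def ofC (z : ℂ) : RSphere := ⟨some z⟩

/-- The point at infinity. -/
def infty : RSphere := ⟨none⟩

/-- Case elimination on a point of the Riemann sphere. -/
def elim {α : Sort*} (x : RSphere) (i : α) (h : ℂ → α) : α := Option.elim x.val i h

/-- Stereographic embedding of the Riemann sphere onto the round unit sphere in
`ℝ³ = ℂ ×₂ ℝ`.  It induces the chordal (spherical) metric on `RSphere`. -/
def embed (x : RSphere) : WithLp 2 (ℂ × ℝ) :=
  elim x ((WithLp.equiv 2 (ℂ × ℝ)).symm (0, 1))
    fun z => (WithLp.equiv 2 (ℂ × ℝ)).symm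
      (((2 / (‖z‖ ^ 2 + 1)) : ℝ) • z, (‖z‖ ^ 2 - 1) / (‖z‖ ^ 2 + 1))

/-- Inverse of the stereographic embedding. -/
def unembed (v : WithLp 2 (ℂ × ℝ)) : RSphere :=
  if (WithLp.equiv 2 (ℂ × ℝ) v).2 = 1 then infty
  else ofC ((1 - (WithLp.equiv 2 (ℂ × ℝ) v).2)⁻¹ • (WithLp.equiv 2 (ℂ × ℝ) v).1)

lemma leftInverse_unembed : Function.LeftInverse unembed embed := by
  rintro ⟨x⟩
  cases x with
  | none =>
      simp [embed, unembed, elim, infty]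
  | some z =>
      have h1 : (0 : ℝ) < ‖z‖ ^ 2 + 1 := by positivity
      have ht : (‖z‖ ^ 2 - 1) / (‖z‖ ^ 2 + 1) ≠ 1 := by
        intro h
        rw [div_eq_one_iff_eq h1.ne'] at h
        linarith
      simp only [embed, unembed, elim, Option.elim, Equiv.apply_symm_apply, ht, if_false, ofC]
      congr 2
      rw [smul_smul]
      have h2 : 1 - (‖z‖ ^ 2 - 1) / (‖z‖ ^ 2 + 1) = 2 / (‖z‖ ^ 2 + 1) := by
        field_simp
        ring
      rw [h2]
      rw [inv_mul_cancel₀ (by positivity), one_smul]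

lemma embed_injective : Function.Injective embed := leftInverse_unembed.injective

/-- The chordal metric on the Riemann sphere, induced by the stereographic embedding
onto the round unit sphere in Euclidean 3-space. -/
instance : MetricSpace RSphere := MetricSpace.induced embed embed_injective inferInstance

instance : MeasurableSpace RSphere := borel RSphere

instance : BorelSpace RSphere := ⟨rfl⟩

/-- Reading off a finite point (junk value `0` at `∞`). -/
def toC (x : RSphere) : ℂ := elim x 0 id

/-- The involution `z ↦ 1/z` of the Riemann sphere. -/
def inv (x : RSphere) : RSphere :=
  elim x (ofC 0) fun z => if z = 0 then infty else ofC z⁻¹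

end RSphere

/-! ### Basic dynamical notions -/

/-- The norm of the derivative of `g` at `x`, measured in the spherical metric
(for a rational map this is the usual norm of the spherical derivative). -/
def sphDeriv (g : RSphere → RSphere) (x : RSphere) : ℝ :=
  limsup (fun y => dist (g y) (g x) / dist y x) (𝓝[≠] x)

/-- The set of critical points. -/
def critSet (g : RSphere → RSphere) : Set RSphere := {x | sphDeriv g x = 0}

/-- The Fatou set: points having a neighbourhood on which the family of iterates is
equicontinuous (i.e. normal). -/
def fatouSet (f : RSphere → RSphere) : Set RSphere :=
  {x | ∃ U : Set RSphere, IsOpen U ∧ x ∈ U ∧ EquicontinuousOn (fun n : ℕ => f^[n]) U}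

/-- The Julia set. -/
def juliaSet (f : RSphere → RSphere) : Set RSphere := (fatouSet f)ᶜ

/-- `f` is the rational map on the Riemann sphere given by the coprime pair of
polynomials `p`, `q`. -/
structure IsRationalMap (f : RSphere → RSphere) (p q : Polynomial ℂ) : Prop where
  coprime : IsCoprime p q
  continuous : Continuous f
  eval : ∀ z : ℂ, q.eval z ≠ 0 → f (RSphere.ofC z) = RSphere.ofC (p.eval z / q.eval z)

/-- The degree of the rational map `p/q`. -/
def ratDeg (p q : Polynomial ℂ) : ℕ := max p.natDegree q.natDegree

/-- The lower Lyapunov exponent `χ̲(x) = liminf (1/n) log |(fⁿ)'(x)|`, as an extended real. -/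
def lyapLower (f : RSphere → RSphere) (x : RSphere) : EReal :=
  liminf (fun n : ℕ => ((Real.log (sphDeriv (f^[n]) x) / n : ℝ) : EReal)) atTop

/-- The upper Lyapunov exponent `χ̄(x) = limsup (1/n) log |(fⁿ)'(x)|`, as an extended real. -/
def lyapUpper (f : RSphere → RSphere) (x : RSphere) : EReal :=
  limsup (fun n : ℕ => ((Real.log (sphDeriv (f^[n]) x) / n : ℝ) : EReal)) atTop

/-- The level set `𝓛(a,b)` of points of the Julia set with lower exponent `a` and
upper exponent `b`. -/
def levelSet (f : RSphere → RSphere) (a b : EReal) : Set RSphere :=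
  {x | x ∈ juliaSet f ∧ lyapLower f x = a ∧ lyapUpper f x = b}

/-- The set `𝓛̂(α,β)` of points of the Julia set with `χ̲ ≤ β`, `χ̄ ≥ α` and `χ̄ > 0`. -/
def levelHat (f : RSphere → RSphere) (α β : ℝ) : Set RSphere :=
  {x | x ∈ juliaSet f ∧ lyapLower f x ≤ (β : EReal) ∧ (α : EReal) ≤ lyapUpper f x ∧
    0 < lyapUpper f x}

/-- Birkhoff sum `S_m φ = φ + φ∘g + ⋯ + φ∘g^{m-1}`. -/
def birkhoff (g : RSphere → RSphere) (φ : RSphere → ℝ) (m : ℕ) (x : RSphere) : ℝ :=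
  ∑ k ∈ Finset.range m, φ (g^[k] x)

/-- An `(m,ε)`-separated finite subset of `Λ` for the map `g`. -/
def IsSepSet (g : RSphere → RSphere) (Λ : Set RSphere) (m : ℕ) (ε : ℝ)
    (E : Finset RSphere) : Prop :=
  ↑E ⊆ Λ ∧ ∀ x ∈ E, ∀ y ∈ E, x ≠ y → ∃ k < m, ε ≤ dist (g^[k] x) (g^[k] y)

/-- Topological pressure of the potential `φ` for `g` restricted to `Λ`,
defined à la Bowen via `(m,ε)`-separated sets. -/
def pressureOn (g : RSphere → RSphere) (Λ : Set RSphere) (φ : RSphere → ℝ) : ℝ :=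
  ⨆ ε : {ε : ℝ // 0 < ε}, limsup (fun m : ℕ =>
    Real.log (⨆ E : {E : Finset RSphere // IsSepSet g Λ m ε.1 E},
      ∑ x ∈ E.1, Real.exp (birkhoff g φ m x)) / m) atTop

/-- `g` is uniformly expanding on `Λ`: `|(gᵐ)'(x)| ≥ c λᵐ` for some `c > 0`, `λ > 1`. -/
def ExpandingOn (g : RSphere → RSphere) (Λ : Set RSphere) : Prop :=
  ∃ c > (0 : ℝ), ∃ l : ℝ, 1 < l ∧ ∀ x ∈ Λ, ∀ m : ℕ, 1 ≤ m → c * l ^ m ≤ sphDeriv (g^[m]) x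

/-- `Λ` is a repeller for `g`: a compact invariant isolated set. -/
def IsRepeller (g : RSphere → RSphere) (Λ : Set RSphere) : Prop :=
  IsCompact Λ ∧ g '' Λ = Λ ∧
    ∃ U : Set RSphere, IsOpen U ∧ Λ ⊆ U ∧ ∀ x, (∀ m : ℕ, g^[m] x ∈ U) → x ∈ Λ

/-- Topological transitivity of `g` on `Λ`. -/
def TopTransOn (g : RSphere → RSphere) (Λ : Set RSphere) : Prop :=
  ∀ U V : Set RSphere, IsOpen U → IsOpen V → (U ∩ Λ).Nonempty → (V ∩ Λ).Nonempty →
    ∃ m : ℕ, (g^[m] '' (U ∩ Λ) ∩ V).Nonempty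

/-- The topological pressure of `φ` with respect to `f` on its Julia set, given by
the supremum of the pressures on compact invariant uniformly expanding subsets of `J`. -/
def pressureTop (f : RSphere → RSphere) (φ : RSphere → ℝ) : ℝ :=
  ⨆ L : {L : Set RSphere //
      L.Nonempty ∧ L ⊆ juliaSet f ∧ IsCompact L ∧ f '' L = L ∧ ExpandingOn f L},
    pressureOn f L.1 φ

/-- The pressure function `d ↦ P(φ_d)` where `φ_d = -d log|f'|`. -/
def pressFamily (f : RSphere → RSphere) (d : ℝ) : ℝ :=
  pressureTop f fun x => -d * Real.log (sphDeriv f x)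

/-- `F(α) = α⁻¹ inf_d (Q(d) + dα)` associated with a pressure function `Q` (for `α ≠ 0`). -/
def specF (Q : ℝ → ℝ) (α : ℝ) : EReal :=
  ((α⁻¹ : ℝ) : EReal) * ⨅ d : ℝ, ((Q d + d * α : ℝ) : EReal)

/-- `F(0) = lim_{α → 0⁺} F(α)`. -/
def specF0 (Q : ℝ → ℝ) : EReal := limsup (fun α : ℝ => specF Q α) (𝓝[>] (0 : ℝ))

/-- The full spectrum function `F` associated with a pressure function `Q`. -/
def specFext (Q : ℝ → ℝ) (α : ℝ) : EReal := if α = 0 then specF0 Q else specF Q α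

/-- The Lyapunov spectrum function `F` of `f`. -/
def Ffun (f : RSphere → RSphere) (α : ℝ) : EReal := specFext (pressFamily f) α

/-- `α⁻ = lim_{d → +∞} -Q(d)/d` for a pressure function `Q`. -/
def alphaMinusOf (Q : ℝ → ℝ) : ℝ := limsup (fun d : ℝ => -Q d / d) atTop

/-- `α⁺ = lim_{d → -∞} -Q(d)/d` for a pressure function `Q`. -/
def alphaPlusOf (Q : ℝ → ℝ) : ℝ := limsup (fun d : ℝ => -Q d / d) atBot

/-- `α⁻` for the map `f`. -/
def alphaMinus (f : RSphere → RSphere) : ℝ := alphaMinusOf (pressFamily f)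

/-- `α⁺` for the map `f`. -/
def alphaPlus (f : RSphere → RSphere) : ℝ := alphaPlusOf (pressFamily f)

/-- The Lyapunov exponent `χ(μ) = ∫ log|g'| dμ` of a measure. -/
def lyapMeas (g : RSphere → RSphere) (μ : Measure RSphere) : ℝ :=
  ∫ x, Real.log (sphDeriv g x) ∂μ

/-- `α⁻` as the infimum of Lyapunov exponents of invariant probability measures on `J`. -/
def alphaMinusMeas (f : RSphere → RSphere) : ℝ :=
  sInf {r : ℝ | ∃ μ : Measure RSphere, IsProbabilityMeasure μ ∧ MeasurePreserving f μ μ ∧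
    μ (juliaSet f)ᶜ = 0 ∧ r = lyapMeas f μ}

/-- `α⁺` as the supremum of Lyapunov exponents of invariant probability measures on `J`. -/
def alphaPlusMeas (f : RSphere → RSphere) : ℝ :=
  sSup {r : ℝ | ∃ μ : Measure RSphere, IsProbabilityMeasure μ ∧ MeasurePreserving f μ μ ∧
    μ (juliaSet f)ᶜ = 0 ∧ r = lyapMeas f μ}

/-- The maximal distortion `sup_{x,y ∈ Z} |g'(x)|/|g'(y)|` of `g` on `Z`. -/
def distortionOn (g : RSphere → RSphere) (Z : Set RSphere) : ℝ :=
  sSup {r : ℝ | ∃ x ∈ Z, ∃ y ∈ Z, r = sphDeriv g x / sphDeriv g y}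

/-- Conical points. -/
def IsConical (f : RSphere → RSphere) (x : RSphere) : Prop :=
  ∃ r : ℝ, 0 < r ∧ ∃ K : ℝ, ∃ n : ℕ → ℕ, StrictMono n ∧ ∃ U : ℕ → Set RSphere,
    ∀ i, U i ∈ 𝓝 x ∧ ball (f^[n i] x) r ⊆ f^[n i] '' U i ∧ distortionOn (f^[n i]) (U i) ≤ K

/-- A non-immediately postcritical point: there is a backward orbit through it that is
dense in the Julia set and avoids the critical points. -/
def NonImmPostCrit (f : RSphere → RSphere) (x : RSphere) : Prop :=
  ∃ b : ℕ → RSphere, b 0 = x ∧ (∀ n, f (b (n + 1)) = b n) ∧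
    juliaSet f ⊆ closure (Set.range b) ∧ ∀ n, b n ∉ critSet f

/-- `f` is exceptional: there is a finite nonempty set `Σ_f` with `f⁻¹(Σ_f) \ Crit = Σ_f`. -/
def IsExceptional (f : RSphere → RSphere) : Prop :=
  ∃ S : Set RSphere, S.Finite ∧ S.Nonempty ∧ f ⁻¹' S \ critSet f = S

/-- The largest exceptional set `Σ` of `f`. -/
def maxExceptional (f : RSphere → RSphere) : Set RSphere :=
  ⋃₀ {S : Set RSphere | S.Finite ∧ S.Nonempty ∧ f ⁻¹' S \ critSet f = S}

/-- `0` not being exceptional, or having exceptional set away from the Julia set. -/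
def GoodExc (f : RSphere → RSphere) : Prop :=
  ¬ IsExceptional f ∨ maxExceptional f ∩ juliaSet f = ∅

/-- A parabolic periodic point at a finite point `z`: a periodic point whose multiplier
is a root of unity. -/
def IsParabolicFix (g : RSphere → RSphere) (z : ℂ) : Prop :=
  ∃ m : ℕ, 0 < m ∧ g^[m] (RSphere.ofC z) = RSphere.ofC z ∧
    ∃ lam : ℂ, (∃ k : ℕ, 0 < k ∧ lam ^ k = 1) ∧
      HasDerivAt (fun w => RSphere.toC (g^[m] (RSphere.ofC w))) lam z

/-- A parabolic periodic point of `f` (at a finite point, or at `∞` read in the chart `1/z`). -/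
def IsParabolic (f : RSphere → RSphere) (x : RSphere) : Prop :=
  (∃ z : ℂ, x = RSphere.ofC z ∧ IsParabolicFix f z) ∨
  (x = RSphere.infty ∧ IsParabolicFix (fun y => RSphere.inv (f (RSphere.inv y))) 0)

/-- A recurrent point. -/
def IsRecurrentPt (f : RSphere → RSphere) (x : RSphere) : Prop :=
  ∃ n : ℕ → ℕ, StrictMono n ∧ Tendsto (fun i => f^[n i] x) atTop (𝓝 x)

/-! ### Graph directed systems and expanding Cantor repellers -/

/-- A graph directed system (GDS) satisfying the strong separation condition with
respect to the map `g`. -/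
structure GDS (g : RSphere → RSphere) where
  /-- number of vertices -/
  n : ℕ
  npos : 0 < n
  /-- the open domains -/
  U : Fin n → Set RSphere
  /-- the admissible edges -/
  edge : Fin n → Fin n → Prop
  /-- the inverse branches -/
  br : Fin n → Fin n → RSphere → RSphere
  isOpen : ∀ k, IsOpen (U k)
  isConnected : ∀ k, IsConnected (U k)
  disjClosure : ∀ k l, k ≠ l → closure (U k) ∩ closure (U l) = ∅
  mapsTo : ∀ k l, edge k l → Set.MapsTo (br k l) (closure (U l)) (U k)
  isBranch : ∀ k l, edge k l → ∀ x ∈ closure (U l), g (br k l x) = x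
  bddDistortion : ∃ C : ℝ, ∀ k l, edge k l → distortionOn (br k l) (closure (U l)) ≤ C

/-- The cylinder sets of depth `m` of a GDS. -/
def gdsCyl {g : RSphere → RSphere} (G : GDS g) : ℕ → Set RSphere
  | 0 => ⋃ k, G.U k
  | m + 1 => ⋃ (k : Fin G.n) (l : Fin G.n) (_ : G.edge k l),
      G.br k l '' (gdsCyl G m ∩ G.U l)

/-- The limit set of a GDS. -/
def gdsLimit {g : RSphere → RSphere} (G : GDS g) : Set RSphere := ⋂ m, gdsCyl G m

/-- An expanding Cantor repeller (ECR) for `g`: a uniformly expanding repeller which is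
the limit set of a GDS satisfying the strong separation condition, with `g(Λ) = Λ`. -/
def IsECR (g : RSphere → RSphere) (Λ : Set RSphere) : Prop :=
  ExpandingOn g Λ ∧ IsRepeller g Λ ∧ ∃ G : GDS g, gdsLimit G = Λ

/-- A Cantor set: compact, perfect and totally disconnected. -/
def IsCantorSet (s : Set RSphere) : Prop :=
  IsCompact s ∧ Perfect s ∧ IsTotallyDisconnected s

/-! ### Entropy, equilibrium states and dimensions -/

/-- The entropy of a countable partition (given by the fibers of `p`). -/
def partEntropy {ι : Type} [Countable ι] (μ : Measure RSphere) (p : RSphere → ι) : ℝ :=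
  ∑' i : ι, Real.negMulLog (μ (p ⁻¹' {i})).toReal

/-- Measure-theoretic (Kolmogorov–Sinai) entropy of `T` with respect to `μ`:
supremum over finite measurable partitions of the exponential growth rate of the
entropies of the dynamical refinements. -/
def entropyOf (T : RSphere → RSphere) (μ : Measure RSphere) : ℝ :=
  ⨆ p : {p : RSphere → ℕ // Measurable p ∧ (Set.range p).Finite},
    ⨅ n : {n : ℕ // 0 < n},
      partEntropy μ (fun x => fun k : Fin n.1 => p.1 (T^[(k : ℕ)] x)) / (n.1 : ℝ)

/-- An equilibrium state for the potential `φ` with respect to `g` restricted to `Λ`. -/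
def IsEquilibrium (g : RSphere → RSphere) (Λ : Set RSphere) (φ : RSphere → ℝ)
    (μ : Measure RSphere) : Prop :=
  IsProbabilityMeasure μ ∧ μ Λᶜ = 0 ∧ MeasurePreserving g μ μ ∧
    entropyOf g μ + ∫ x, φ x ∂μ = pressureOn g Λ φ

/-- The Hausdorff dimension of a measure: the infimum of the Hausdorff dimensions of
sets of full measure. -/
def dimHMeasure (μ : Measure RSphere) : ℝ≥0∞ :=
  ⨅ (s : Set RSphere) (_ : μ sᶜ = 0), dimH s

/-- The minimal number of `ε`-balls needed to cover `s`. -/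
def coverNum (s : Set RSphere) (ε : ℝ) : ℕ :=
  sInf {n : ℕ | ∃ t : Finset RSphere, t.card = n ∧ s ⊆ ⋃ x ∈ t, ball x ε}

/-- The upper box-counting dimension. -/
def upperBoxDim (s : Set RSphere) : ℝ :=
  limsup (fun n : ℕ => Real.log (coverNum s (1 / n)) / Real.log n) atTop

/-- The packing dimension, via countable covers and upper box dimensions. -/
def dimP (s : Set RSphere) : ℝ≥0∞ :=
  ⨅ c : {c : ℕ → Set RSphere // s ⊆ ⋃ n, c n},
    ⨆ n : ℕ, ENNReal.ofReal (upperBoxDim (c.1 n))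

/-- The connected component of `y` in `g⁻¹(B)`: the pull-back of `B` along the inverse
branch of `g` sending (the image of) `y` to `y`. -/
def invBranchSet (g : RSphere → RSphere) (B : Set RSphere) (y : RSphere) : Set RSphere :=
  connectedComponentIn (g ⁻¹' B) y

/-!
Fix `n` and a sequence `s 0 < s 1 < ⋯` of small radii, and let `D i` be the set of points whose
first `n + 1` iterates follow `Λ`, the `j`-th one within distance `s (i + j)`. As `Λ` is totally
disconnected, connected subsets of `D i` have small images under these `n + 1` iterates, so by
expansion those that meet `Λ` are themselves tiny if `n` is large. Since `f` is open and injective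
near `Λ`, a connected subset of `D (i + 1)` through `f x` with `x ∈ Λ` lifts into the component of
`D i` at `x`: the tolerances are shifted by one index on both sides.

The relation of lying in the same component of `D i` on `Λ` is carried by finitely many components
and grows with `i`, hence is the same for `D m` and `D (m + 1)` for some `m`. The closures of the
components of `D m` then lie in components of `D (m + 1)`, which makes them pairwise disjoint, and
`f` maps each component over the closure of every component that `Λ` sees from it. The limit set of
the corresponding inverse branches consists of the points whose orbits make only transitions made by
`Λ`. It is a repeller, and it is uniformly expanding because `f^[N]` has spherical derivative larger
than `2` on `Λ` for some `N`, and hence near `Λ`.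
-/

/-! ### Components near a totally disconnected compact set -/

section SmallComponents

variable {X : Type*} [MetricSpace X] {Λ : Set X} {x : X} {η : ℝ}

lemma exists_isolated_subset (hΛ : IsCompact Λ) (htd : IsTotallyDisconnected Λ)
    (hx : x ∈ Λ) (hη : 0 < η) :
    ∃ A ∈ 𝓝[Λ] x, A ⊆ ball x η ∧
      ∃ s > 0, Disjoint (thickening s A) (thickening s (Λ \ A)) := by
  have : CompactSpace Λ := isCompact_iff_compactSpace.mp hΛ
  have : TotallyDisconnectedSpace Λ := totallyDisconnectedSpace_subtype_iff.mpr htd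
  obtain ⟨V, hV, hxV, hVball⟩ := compact_exists_isClopen_in_isOpen
    (isOpen_ball.preimage continuous_subtype_val) (show (⟨x, hx⟩ : Λ) ∈ _ from mem_ball_self hη)
  have hdiff : Λ \ (↑) '' V = ((↑) : Λ → X) '' Vᶜ := by
    rw [image_compl_eq_range_sdiff_image Subtype.val_injective, Subtype.range_coe]
  refine ⟨(↑) '' V, ?_, image_subset_iff.mpr hVball, ?_⟩
  · rw [nhdsWithin_eq_map_subtype_coe hx]
    exact image_mem_map (hV.isOpen.mem_nhds hxV)
  · rw [hdiff]
    have hdisj : Disjoint (((↑) : Λ → X) '' V) ((↑) '' Vᶜ) :=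
      disjoint_image_of_injective Subtype.val_injective disjoint_compl_right
    exact hdisj.exists_thickenings
      (hV.isClosed.isCompact.image continuous_subtype_val)
      (hV.compl.isClosed.isCompact.image continuous_subtype_val).isClosed

/-- A preconnected subset of a thin thickening of `Λ` cannot leave an isolated piece of `Λ`. -/
lemma exists_nhdsWithin_preconnected_dist_lt (hΛ : IsCompact Λ) (htd : IsTotallyDisconnected Λ)
    (hx : x ∈ Λ) (hη : 0 < η) :
    ∃ A ∈ 𝓝[Λ] x, ∃ s > 0, ∀ C, IsPreconnected C → C ⊆ thickening s Λ →
      (C ∩ thickening s A).Nonempty → ∀ y ∈ C, ∀ z ∈ C, dist y z < η := by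
  obtain ⟨A, hA, hAball, s, hs, hdisj⟩ :=
    exists_isolated_subset hΛ htd hx (show 0 < η / 4 by positivity)
  refine ⟨A, hA, min s (η / 4), by positivity, fun C hC hCΛ hCA => ?_⟩
  have hle : thickening (min s (η / 4)) A ⊆ thickening s A :=
    thickening_mono (min_le_left _ _) _
  have hcover : C ⊆ thickening (min s (η / 4)) A ∪ thickening (min s (η / 4)) (Λ \ A) := by
    rw [← thickening_union]
    refine hCΛ.trans (thickening_subset_of_subset _ fun y hy => ?_)
    by_cases hyA : y ∈ A
    exacts [Or.inl hyA, Or.inr ⟨hy, hyA⟩]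
  have hCA' : C ⊆ thickening (min s (η / 4)) A :=
    hC.subset_left_of_subset_union isOpen_thickening isOpen_thickening
      (hdisj.mono hle (thickening_mono (min_le_left _ _) _)) hcover hCA
  have hnear : ∀ y ∈ C, dist y x < η / 2 := fun y hy => by
    obtain ⟨a, ha, hya⟩ := mem_thickening_iff.mp (hCA' hy)
    have hax : dist a x < η / 4 := hAball ha
    linarith [dist_triangle y a x, min_le_right s (η / 4)]
  intro y hy z hz
  linarith [dist_triangle_right y z x, hnear y hy, hnear z hz]

theorem exists_thickening_preconnected_dist_lt (hΛ : IsCompact Λ)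
    (htd : IsTotallyDisconnected Λ) (hη : 0 < η) :
    ∃ s > 0, ∀ C, IsPreconnected C → C ⊆ thickening s Λ →
      ∀ y ∈ C, ∀ z ∈ C, dist y z < η := by
  obtain ⟨s, hs, h⟩ : ∃ s > 0, ∀ C, IsPreconnected C → C ⊆ thickening s Λ →
      (C ∩ thickening s Λ).Nonempty → ∀ y ∈ C, ∀ z ∈ C, dist y z < η := by
    refine hΛ.induction_on (p := fun S => ∃ s > 0, ∀ C, IsPreconnected C → C ⊆ thickening s Λ →
      (C ∩ thickening s S).Nonempty → ∀ y ∈ C, ∀ z ∈ C, dist y z < η) ⟨1, one_pos, ?_⟩ ?_ ?_ ?_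
    · simp
    · rintro S T hST ⟨s, hs, h⟩
      exact ⟨s, hs, fun C hC hCΛ hCS =>
        h C hC hCΛ (hCS.mono (inter_subset_inter_right _ (thickening_subset_of_subset _ hST)))⟩
    · rintro S T ⟨s, hs, hS⟩ ⟨t, ht, hT⟩
      refine ⟨min s t, lt_min hs ht, fun C hC hCΛ ⟨w, hwC, hw⟩ => ?_⟩
      rw [thickening_union] at hw
      rcases hw with hw | hw
      · have hle := min_le_left s t
        exact hS C hC (hCΛ.trans (thickening_mono hle _)) ⟨w, hwC, thickening_mono hle _ hw⟩
      · have hle := min_le_right s t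
        exact hT C hC (hCΛ.trans (thickening_mono hle _)) ⟨w, hwC, thickening_mono hle _ hw⟩
    · exact fun x hx => exists_nhdsWithin_preconnected_dist_lt hΛ htd hx hη
  exact ⟨s, hs, fun C hC hCΛ y hy => h C hC hCΛ ⟨y, hy, hCΛ hy⟩ y hy⟩

end SmallComponents

/-- Finitely many components of `D 0` cover `Λ`, and which of them lie in a common component of
`D n` is an increasing relation in `n` on a finite set, so it stabilises. -/
theorem exists_stable_connectedComponentIn {X : Type*} [TopologicalSpace X]
    [LocallyConnectedSpace X] {Λ : Set X} (hΛ : IsCompact Λ) {D : ℕ → Set X} (hD : Monotone D)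
    (hopen : IsOpen (D 0)) (hsub : Λ ⊆ D 0) :
    ∃ m, ∀ x ∈ Λ, ∀ y ∈ Λ, y ∈ connectedComponentIn (D (m + 1)) x →
      y ∈ connectedComponentIn (D m) x := by
  have hmem (n : ℕ) {x : X} (hx : x ∈ Λ) : x ∈ D n := hD (Nat.zero_le n) (hsub hx)
  have hmono {n k : ℕ} (hnk : n ≤ k) (x : X) :
      connectedComponentIn (D n) x ⊆ connectedComponentIn (D k) x :=
    connectedComponentIn_mono x (hD hnk)
  obtain ⟨F, hFΛ, hF⟩ := hΛ.elim_nhds_subcover (connectedComponentIn (D 0)) fun x hx =>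
    hopen.connectedComponentIn.mem_nhds (mem_connectedComponentIn (hsub hx))
  have hrep (x) (hx : x ∈ Λ) : ∃ z : F, ∀ n,
      connectedComponentIn (D n) x = connectedComponentIn (D n) z := by
    obtain ⟨z, hz, hxz⟩ := mem_iUnion₂.mp (hF hx)
    exact ⟨⟨z, hz⟩, fun n => (connectedComponentIn_eq (hmono (Nat.zero_le n) z hxz)).symm⟩
  let R : ℕ →o Set (F × F) :=
    ⟨fun n => {w | (w.2 : X) ∈ connectedComponentIn (D n) w.1}, fun n k hnk w hw =>
      hmono hnk _ hw⟩
  obtain ⟨m, hm⟩ := WellFoundedGT.monotone_chain_condition R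
  refine ⟨m, fun x hx y hy hxy => ?_⟩
  obtain ⟨z, hz⟩ := hrep x hx
  obtain ⟨w, hw⟩ := hrep y hy
  have hstep : (z, w) ∈ R (m + 1) := by
    change (w : X) ∈ connectedComponentIn (D (m + 1)) z
    rw [← hz, connectedComponentIn_eq hxy, hw]
    exact mem_connectedComponentIn (hmem _ (hFΛ w w.2))
  have hback : (w : X) ∈ connectedComponentIn (D m) z := by
    rw [← hm (m + 1) m.le_succ] at hstep
    exact hstep
  rw [hz, connectedComponentIn_eq hback, ← hw]
  exact mem_connectedComponentIn (hmem m hy)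

/-! ### Expansion and orbit tubes -/

section Expansion

variable {X : Type*} {f : X → X} {Λ : Set X} {a r : ℝ}

/-- `f` expands distances by the factor `a` on each ball of radius `r` centred in `Λ`. -/
def LocallyExpanding [PseudoMetricSpace X] (f : X → X) (Λ : Set X) (a r : ℝ) : Prop :=
  ∀ x ∈ Λ, ∀ y ∈ ball x r, ∀ z ∈ ball x r, a * dist y z ≤ dist (f y) (f z)

/-- Uniform (positive) expansiveness of `f` along `Λ` at scale `r`: a point whose orbit follows
that of some `x ∈ Λ` within distance `r` for a long time is close to `x`, uniformly in `x`. -/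
def UniformlyExpansiveOn [PseudoMetricSpace X] (f : X → X) (Λ : Set X) (r : ℝ) : Prop :=
  ∀ ε > 0, ∃ n, ∀ x ∈ Λ, ∀ y, (∀ j ≤ n, dist (f^[j] y) (f^[j] x) < r) → dist y x < ε

lemma LocallyExpanding.injOn [MetricSpace X] (h : LocallyExpanding f Λ a r) (ha : 0 < a) {x : X}
    (hx : x ∈ Λ) : InjOn f (ball x r) := by
  intro y hy z hz hyz
  have hle := h x hx y hy z hz
  rw [hyz, dist_self] at hle
  exact dist_le_zero.mp (nonpos_of_mul_nonpos_right hle ha)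

variable [PseudoMetricSpace X]

lemma LocallyExpanding.pow_mul_dist_le (h : LocallyExpanding f Λ a r) (ha : 0 ≤ a)
    (hinv : MapsTo f Λ Λ) {x y : X} (hx : x ∈ Λ) {k : ℕ}
    (hxy : ∀ j < k, dist (f^[j] y) (f^[j] x) < r) :
    a ^ k * dist y x ≤ dist (f^[k] y) (f^[k] x) := by
  induction k with
  | zero => simp
  | succ k ih =>
    have hk := hxy k k.lt_succ_self
    rw [Function.iterate_succ_apply', Function.iterate_succ_apply']
    calc a ^ (k + 1) * dist y x = a * (a ^ k * dist y x) := by ring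
      _ ≤ a * dist (f^[k] y) (f^[k] x) := by
        gcongr
        exact ih fun j hj => hxy j (hj.trans k.lt_succ_self)
      _ ≤ dist (f (f^[k] y)) (f (f^[k] x)) :=
        h _ (hinv.iterate k hx) _ hk _ (mem_ball_self (dist_nonneg.trans_lt hk))

lemma LocallyExpanding.uniformlyExpansiveOn {N : ℕ} (h : LocallyExpanding f^[N] Λ a r)
    (ha : 1 < a) (hinv : MapsTo f Λ Λ) : UniformlyExpansiveOn f Λ r := by
  intro ε hε
  obtain ⟨k, hk⟩ := pow_unbounded_of_one_lt (r / ε) ha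
  refine ⟨N * k, fun x hx y hxy => ?_⟩
  have hdist : ∀ j ≤ k, dist ((f^[N])^[j] y) ((f^[N])^[j] x) < r := fun j hj => by
    rw [← Function.iterate_mul]
    exact hxy _ (Nat.mul_le_mul_left N hj)
  have hpow : a ^ k * dist y x < r :=
    (h.pow_mul_dist_le (by linarith) (hinv.iterate N) hx fun j hj => hdist j hj.le).trans_lt
      (hdist k le_rfl)
  have hak : 0 < a ^ k := by positivity
  rw [div_lt_iff₀ hε] at hk
  exact lt_of_mul_lt_mul_left (hpow.trans hk) hak.le

theorem exists_ball_subset_image_ball (hf : Continuous f) (hΛ : IsCompact Λ) (hr : 0 < r)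
    (hopen : ∀ x ∈ Λ, 𝓝 (f x) ≤ map f (𝓝 x)) :
    ∃ ρ > 0, ∀ x ∈ Λ, ball (f x) ρ ⊆ f '' ball x r := by
  refine hΛ.induction_on (p := fun S => ∃ ρ > 0, ∀ x ∈ S, ball (f x) ρ ⊆ f '' ball x r)
    ⟨1, one_pos, by simp⟩ ?_ ?_ fun x hx => ?_
  · rintro S T hST ⟨ρ, hρ, h⟩
    exact ⟨ρ, hρ, fun x hx => h x (hST hx)⟩
  · rintro S T ⟨ρ, hρ, hS⟩ ⟨ρ', hρ', hT⟩
    refine ⟨min ρ ρ', lt_min hρ hρ', ?_⟩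
    rintro x (hx | hx)
    · exact (ball_subset_ball (min_le_left _ _)).trans (hS x hx)
    · exact (ball_subset_ball (min_le_right _ _)).trans (hT x hx)
  · have hnhds : f '' ball x (r / 2) ∈ 𝓝 (f x) :=
      hopen x hx (image_mem_map (ball_mem_nhds x (half_pos hr)))
    obtain ⟨ρ, hρ, hball⟩ := Metric.mem_nhds_iff.mp hnhds
    refine ⟨ball x (r / 2) ∩ f ⁻¹' ball (f x) (ρ / 2), mem_nhdsWithin_of_mem_nhds (inter_mem
      (ball_mem_nhds x (half_pos hr)) (hf.continuousAt (ball_mem_nhds _ (half_pos hρ)))),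
      ρ / 2, half_pos hρ, ?_⟩
    rintro y ⟨hyx, hfyx⟩
    rw [mem_preimage, mem_ball] at hfyx
    rw [mem_ball] at hyx
    calc ball (f y) (ρ / 2) ⊆ ball (f x) ρ := ball_subset_ball' (by linarith)
      _ ⊆ f '' ball x (r / 2) := hball
      _ ⊆ f '' ball y r := image_mono (ball_subset_ball' (by rw [dist_comm]; linarith))

end Expansion

lemma isPreconnected_inter_preimage_of_isCompact {X Y : Type*} [TopologicalSpace X]
    [TopologicalSpace Y] [T2Space Y] {f : X → Y} {K : Set X} {C : Set Y} (hC : IsPreconnected C)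
    (hK : IsCompact K) (hf : ContinuousOn f K) (hinj : InjOn f K) (hCK : C ⊆ f '' K) :
    IsPreconnected (K ∩ f ⁻¹' C) := by
  have : CompactSpace K := isCompact_iff_compactSpace.mp hK
  have hpre : IsPreconnected (K.domRestrict f ⁻¹' C) :=
    hC.preimage_of_isClosedMap hinj.injective hf.domRestrict.isClosedMap
      (by rwa [range_domRestrict])
  rw [← Subtype.image_preimage_coe]
  exact hpre.image _ continuous_subtype_val.continuousOn

section OrbitTube

variable {X : Type*} [PseudoMetricSpace X] {f : X → X} {Λ : Set X} {s s' : ℕ → ℝ} {n : ℕ}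

/-- The points whose first `n + 1` iterates follow `Λ`, the `j`-th one within distance `s j`. -/
def orbitTube (f : X → X) (Λ : Set X) (s : ℕ → ℝ) (n : ℕ) : Set X :=
  {y | ∀ j ≤ n, f^[j] y ∈ thickening (s j) Λ}

lemma isOpen_orbitTube (hf : Continuous f) : IsOpen (orbitTube f Λ s n) := by
  have heq : orbitTube f Λ s n = ⋂ j ∈ Iic n, f^[j] ⁻¹' thickening (s j) Λ := by
    ext y
    simp [orbitTube]
  rw [heq]
  exact (finite_Iic n).isOpen_biInter fun j _ => isOpen_thickening.preimage (hf.iterate j)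

lemma subset_orbitTube (hinv : MapsTo f Λ Λ) (hs : ∀ j, 0 < s j) : Λ ⊆ orbitTube f Λ s n :=
  fun _ hx j _ => self_subset_thickening (hs j) Λ (hinv.iterate j hx)

lemma closure_orbitTube_subset (hf : Continuous f) (hs' : ∀ j, 0 < s' j) (hs : ∀ j, s j < s' j) :
    closure (orbitTube f Λ s n) ⊆ orbitTube f Λ s' n := by
  intro y hy j hj
  have hmaps : MapsTo f^[j] (orbitTube f Λ s n) (thickening (s j) Λ) := fun z hz => hz j hj
  exact cthickening_subset_thickening' (hs' j) (hs j) Λ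
    (closure_thickening_subset_cthickening _ _ (hmaps.closure (hf.iterate j) hy))

lemma orbitTube_subset_thickening : orbitTube f Λ s n ⊆ thickening (s 0) Λ :=
  fun _ hy => hy 0 n.zero_le

lemma mem_orbitTube_of_apply {u : X} (hu : u ∈ thickening (s 0) Λ)
    (hfu : f u ∈ orbitTube f Λ (fun j => s (j + 1)) n) : u ∈ orbitTube f Λ s n := by
  rintro (_ | j) hj
  · exact hu
  · exact hfu j (j.le_succ.trans hj)

end OrbitTube

/-! ### Markov covers -/

section MarkovCover

variable {X ι : Type*} {f : X → X} {Λ : Set X} {U : ι → Set X}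

/-- The transition `k → l` is realised by a point of `Λ`. -/
def MarkovEdge (f : X → X) (Λ : Set X) (U : ι → Set X) (k l : ι) : Prop :=
  (Λ ∩ U k ∩ f ⁻¹' U l).Nonempty

/-- A cover of `Λ` by domains with disjoint closures on which `f` is injective and which satisfies
the Markov property: every transition realised by `Λ` is a full branch. -/
structure IsMarkovCover [TopologicalSpace X] (f : X → X) (Λ : Set X) (U : ι → Set X) : Prop where
  isOpen : ∀ k, IsOpen (U k)
  isConnected : ∀ k, IsConnected (U k)
  disjoint_closure : ∀ k l, k ≠ l → Disjoint (closure (U k)) (closure (U l))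
  subset_iUnion : Λ ⊆ ⋃ k, U k
  inter_nonempty : ∀ k, (Λ ∩ U k).Nonempty
  injOn_closure : ∀ k, InjOn f (closure (U k))
  closure_subset_image : ∀ k l, MarkovEdge f Λ U k l → closure (U l) ⊆ f '' U k

lemma exists_fin_range_eq_connectedComponentIn [TopologicalSpace X] [LocallyConnectedSpace X]
    {D : Set X} (hΛ : IsCompact Λ) (hD : IsOpen D) (hΛD : Λ ⊆ D) :
    ∃ (n : ℕ) (U : Fin n ↪ Set X), range U = connectedComponentIn D '' Λ := by
  obtain ⟨F, -, hF⟩ := hΛ.elim_nhds_subcover (connectedComponentIn D) fun x hx =>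
    hD.connectedComponentIn.mem_nhds (mem_connectedComponentIn (hΛD hx))
  refine Set.Finite.fin_embedding ((F.finite_toSet.image (connectedComponentIn D)).subset ?_)
  rintro _ ⟨x, hx, rfl⟩
  obtain ⟨z, hz, hxz⟩ := mem_iUnion₂.mp (hF hx)
  exact ⟨z, hz, connectedComponentIn_eq hxz⟩

lemma exists_isMarkovCover_connectedComponentIn [TopologicalSpace X] [LocallyConnectedSpace X]
    {D : Set X} (hΛ : IsCompact Λ) (hD : IsOpen D) (hΛD : Λ ⊆ D)
    (hsep : ∀ x ∈ Λ, ∀ y ∈ Λ,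
      (closure (connectedComponentIn D x) ∩ closure (connectedComponentIn D y)).Nonempty →
        y ∈ connectedComponentIn D x)
    (hinj : ∀ x ∈ Λ, InjOn f (closure (connectedComponentIn D x)))
    (hmarkov : ∀ x ∈ Λ,
      closure (connectedComponentIn D (f x)) ⊆ f '' connectedComponentIn D x) :
    ∃ (n : ℕ) (U : Fin n → Set X), IsMarkovCover f Λ U ∧ ⋃ k, U k ⊆ D := by
  obtain ⟨n, U, hU⟩ := exists_fin_range_eq_connectedComponentIn hΛ hD hΛD
  have hrep (k) : ∃ x ∈ Λ, connectedComponentIn D x = U k := by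
    have hk : U k ∈ range U := mem_range_self k
    rwa [hU] at hk
  choose p hpΛ hp using hrep
  have hcomp {k x} (hx : x ∈ U k) : U k = connectedComponentIn D x := by
    rw [← hp] at hx ⊢
    exact connectedComponentIn_eq hx
  have hpU (k) : p k ∈ U k := hp k ▸ mem_connectedComponentIn (hΛD (hpΛ k))
  refine ⟨n, U, ?_, iUnion_subset fun k => hp k ▸ connectedComponentIn_subset D _⟩
  exact
  { isOpen := fun k => hp k ▸ hD.connectedComponentIn
    isConnected := fun k => hp k ▸ isConnected_connectedComponentIn_iff.mpr (hΛD (hpΛ k))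
    disjoint_closure := fun k l hkl => by
      refine disjoint_iff_inter_eq_empty.mpr (not_nonempty_iff_eq_empty.mp fun hmeet => hkl ?_)
      rw [← hp k, ← hp l] at hmeet
      refine U.injective ?_
      rw [← hp k, ← hp l, connectedComponentIn_eq (hsep _ (hpΛ k) _ (hpΛ l) hmeet)]
    subset_iUnion := fun x hx => by
      obtain ⟨k, hk⟩ : connectedComponentIn D x ∈ range U := hU ▸ mem_image_of_mem _ hx
      exact mem_iUnion.mpr ⟨k, hk ▸ mem_connectedComponentIn (hΛD hx)⟩
    inter_nonempty := fun k => ⟨p k, hpΛ k, hpU k⟩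
    injOn_closure := fun k => hp k ▸ hinj _ (hpΛ k)
    closure_subset_image := by
      rintro k l ⟨x, ⟨hx, hxk⟩, hxl⟩
      rw [hcomp hxk, hcomp hxl]
      exact hmarkov x hx }

end MarkovCover

/-! ### Existence of Markov covers -/

section ExistsMarkovCover

variable {X : Type*} {f : X → X} {Λ : Set X} {r : ℝ}

lemma subset_ball_of_subset_orbitTube [PseudoMetricSpace X] {s : ℕ → ℝ} {n : ℕ} {T ρ : ℝ}
    (hf : Continuous f)
    (hT : ∀ C, IsPreconnected C → C ⊆ thickening T Λ → ∀ y ∈ C, ∀ z ∈ C, dist y z < r)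
    (hn : ∀ x ∈ Λ, ∀ y, (∀ j ≤ n, dist (f^[j] y) (f^[j] x) < r) → dist y x < ρ)
    (hs : ∀ j, s j ≤ T) {C : Set X} (hC : IsPreconnected C) (hCs : C ⊆ orbitTube f Λ s n)
    {x : X} (hx : x ∈ Λ) (hxC : x ∈ C) : C ⊆ ball x ρ := by
  refine fun y hy => hn x hx y fun j hj => ?_
  refine hT (f^[j] '' C) (hC.image _ (hf.iterate j).continuousOn) ?_ _ (mem_image_of_mem _ hy) _
    (mem_image_of_mem _ hxC)
  rintro _ ⟨z, hz, rfl⟩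
  exact thickening_mono (hs j) Λ (hCs hz j hj)

/-- The branch of `f` near `x` lifts `C` to a preconnected set through `x`. -/
lemma subset_image_connectedComponentIn [MetricSpace X] [ProperSpace X] {σ : ℝ} {x : X}
    {C D : Set X} (hf : Continuous f) (hinj : InjOn f (closedBall x σ)) (hC : IsPreconnected C)
    (hxC : f x ∈ C) (hCσ : C ⊆ f '' closedBall x σ) (hD : closedBall x σ ∩ f ⁻¹' C ⊆ D) :
    C ⊆ f '' connectedComponentIn D x := by
  have hlift : IsPreconnected (closedBall x σ ∩ f ⁻¹' C) :=
    isPreconnected_inter_preimage_of_isCompact hC (isCompact_closedBall x σ) hf.continuousOn hinj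
      hCσ
  have hσ : 0 ≤ σ := by
    obtain ⟨u, hu, -⟩ := hCσ hxC
    exact dist_nonneg.trans (mem_closedBall.mp hu)
  have hsub := hlift.subset_connectedComponentIn ⟨mem_closedBall_self hσ, hxC⟩ hD
  intro w hw
  obtain ⟨u, hu, rfl⟩ := hCσ hw
  exact mem_image_of_mem f (hsub ⟨hu, hw⟩)

/-- At a stage `m` where the components have stabilised, two components of `D m` whose closures meet
lie in one component of `D (m + 1)`, hence coincide. -/
theorem exists_isMarkovCover_of_tower [TopologicalSpace X] [LocallyConnectedSpace X]
    (hΛ : IsCompact Λ) (hinv : MapsTo f Λ Λ) {D : ℕ → Set X} (hD : ∀ i, IsOpen (D i))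
    (hΛD : ∀ i, Λ ⊆ D i) (hclosure : ∀ i, closure (D i) ⊆ D (i + 1))
    (hinj : ∀ i C, IsPreconnected C → C ⊆ D i → (Λ ∩ C).Nonempty → InjOn f C)
    (hlift : ∀ i C, IsPreconnected C → C ⊆ D (i + 1) → ∀ x ∈ Λ, f x ∈ C →
      C ⊆ f '' connectedComponentIn (D i) x) :
    ∃ (n : ℕ) (U : Fin n → Set X), IsMarkovCover f Λ U ∧ ⋃ k, U k ⊆ ⋃ i, D i := by
  obtain ⟨m, hstable⟩ := exists_stable_connectedComponentIn hΛ
    (monotone_nat_of_le_succ fun i => subset_closure.trans (hclosure i)) (hD 0) (hΛD 0)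
  have hsub (x) : closure (connectedComponentIn (D m) x) ⊆ D (m + 1) :=
    (closure_mono (connectedComponentIn_subset _ _)).trans (hclosure m)
  have hpre (x) : IsPreconnected (closure (connectedComponentIn (D m) x)) :=
    isPreconnected_connectedComponentIn.closure
  have hmem {x} (hx : x ∈ Λ) : x ∈ closure (connectedComponentIn (D m) x) :=
    subset_closure (mem_connectedComponentIn (hΛD m hx))
  obtain ⟨n, U, hU, hUD⟩ := exists_isMarkovCover_connectedComponentIn hΛ (hD m) (hΛD m)
    (fun x hx y hy hmeet => hstable x hx y hy
      (((hpre x).union' hmeet (hpre y)).subset_connectedComponentIn (Or.inl (hmem hx))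
        (union_subset (hsub x) (hsub y)) (Or.inr (hmem hy))))
    (fun x hx => hinj (m + 1) _ (hpre x) (hsub x) ⟨x, hx, hmem hx⟩)
    (fun x hx => hlift m _ (hpre _) (hsub _) x hx (hmem (hinv hx)))
  exact ⟨n, U, hU, hUD.trans (subset_iUnion D m)⟩

theorem exists_isMarkovCover [MetricSpace X] [ProperSpace X] [LocallyConnectedSpace X]
    (hf : Continuous f) (hΛ : IsCompact Λ) (htd : IsTotallyDisconnected Λ)
    (hinv : MapsTo f Λ Λ) (hr : 0 < r) (hexp : UniformlyExpansiveOn f Λ r)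
    (hinj : ∀ x ∈ Λ, InjOn f (ball x r)) (hopen : ∀ x ∈ Λ, 𝓝 (f x) ≤ map f (𝓝 x))
    {O : Set X} (hO : IsOpen O) (hΛO : Λ ⊆ O) :
    ∃ (n : ℕ) (U : Fin n → Set X), IsMarkovCover f Λ U ∧ ⋃ k, U k ⊆ O := by
  obtain ⟨T, hT, hsmall⟩ := exists_thickening_preconnected_dist_lt hΛ htd hr
  obtain ⟨T₀, hT₀, hT₀O⟩ := hΛ.exists_thickening_subset_open hO hΛO
  obtain ⟨s, hs, hsIoo, -⟩ :=
    exists_seq_strictMono_tendsto' (show 0 < min T (min T₀ r) by positivity)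
  simp only [mem_Ioo, lt_min_iff] at hsIoo
  have hspos (i) : 0 < s i := (hsIoo i).1
  have hsT (i) : s i ≤ T := (hsIoo i).2.1.le
  have hsr : s 0 < r := (hsIoo 0).2.2.2
  obtain ⟨ρ, hρ, hbranch⟩ := exists_ball_subset_image_ball hf hΛ (half_pos (hspos 0)) hopen
  obtain ⟨n, hn⟩ := hexp ρ hρ
  let D (i : ℕ) : Set X := orbitTube f Λ (fun j => s (i + j)) n
  have hlift (i) (C : Set X) (hC : IsPreconnected C) (hCD : C ⊆ D (i + 1)) (x) (hx : x ∈ Λ)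
      (hxC : f x ∈ C) : C ⊆ f '' connectedComponentIn (D i) x := by
    have hball : C ⊆ ball (f x) ρ :=
      subset_ball_of_subset_orbitTube hf hsmall hn (fun j => hsT _) hC hCD (hinv hx) hxC
    refine subset_image_connectedComponentIn hf
      ((hinj x hx).mono (closedBall_subset_ball (by linarith [hspos 0]))) hC hxC
      ((hball.trans (hbranch x hx)).trans (image_mono ball_subset_closedBall)) ?_
    rintro u ⟨hux, hfu⟩
    refine mem_orbitTube_of_apply (mem_thickening_iff.mpr ⟨x, hx, ?_⟩) ?_
    · linarith [hspos 0, mem_closedBall.mp hux, hs.monotone (Nat.zero_le (i + 0))]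
    · simpa only [D, add_right_comm i 1, ← add_assoc] using hCD hfu
  obtain ⟨k, U, hU, hUD⟩ := exists_isMarkovCover_of_tower hΛ hinv
    (fun i => isOpen_orbitTube hf) (fun i => subset_orbitTube hinv fun j => hspos (i + j))
    (fun i => closure_orbitTube_subset hf (fun j => hspos _) fun j => hs (by lia))
    (fun i C hC hCD ⟨x, hx, hxC⟩ => (hinj x hx).mono fun y hy => hsmall C hC
      (hCD.trans (orbitTube_subset_thickening.trans (thickening_mono (hsT _) Λ))) y hy x hxC)
    hlift
  refine ⟨k, U, hU, hUD.trans (iUnion_subset fun i => orbitTube_subset_thickening.trans ?_)⟩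
  exact (thickening_mono (hsIoo _).2.2.1.le Λ).trans hT₀O

end ExistsMarkovCover

/-! ### The limit set of a Markov cover -/

section MarkovLimit

variable {X ι : Type*} {f : X → X} {Λ : Set X} {U : ι → Set X} {x : X}

/-- The points whose whole orbit follows transitions realised by `Λ`. For a Markov cover this is
the limit set of the graph directed system of the inverse branches. -/
def markovLimit (f : X → X) (Λ : Set X) (U : ι → Set X) : Set X :=
  {x | ∀ m, ∃ k l, MarkovEdge f Λ U k l ∧ f^[m] x ∈ U k ∧ f^[m + 1] x ∈ U l}

lemma markovLimit_subset_iUnion : markovLimit f Λ U ⊆ ⋃ k, U k := fun _ hx => by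
  obtain ⟨k, -, -, hk, -⟩ := hx 0
  exact mem_iUnion.mpr ⟨k, hk⟩

lemma apply_mem_markovLimit (hx : x ∈ markovLimit f Λ U) : f x ∈ markovLimit f Λ U :=
  fun m => hx (m + 1)

lemma mem_markovLimit_of_apply {k l : ι} (hkl : MarkovEdge f Λ U k l) (hk : x ∈ U k)
    (hl : f x ∈ U l) (hx : f x ∈ markovLimit f Λ U) : x ∈ markovLimit f Λ U := by
  rintro (_ | m)
  exacts [⟨k, l, hkl, hk, hl⟩, hx m]

lemma subset_markovLimit (hinv : MapsTo f Λ Λ) (hU : Λ ⊆ ⋃ k, U k) : Λ ⊆ markovLimit f Λ U := by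
  intro x hx m
  have hm := hinv.iterate m hx
  obtain ⟨k, hk⟩ := mem_iUnion.mp (hU hm)
  obtain ⟨l, hl⟩ := mem_iUnion.mp (hU (hinv hm))
  rw [Function.iterate_succ_apply']
  exact ⟨k, l, ⟨_, ⟨hm, hk⟩, hl⟩, hk, hl⟩

variable [TopologicalSpace X]

lemma IsMarkovCover.eq_of_mem (h : IsMarkovCover f Λ U) {k l : ι} (hk : x ∈ closure (U k))
    (hl : x ∈ U l) : k = l := by
  by_contra hkl
  exact disjoint_left.mp (h.disjoint_closure k l hkl) hk (subset_closure hl)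

lemma IsMarkovCover.exists_markovEdge (h : IsMarkovCover f Λ U) (hinv : f '' Λ = Λ) (l : ι) :
    ∃ k, MarkovEdge f Λ U k l := by
  obtain ⟨y, hy, hyl⟩ := h.inter_nonempty l
  obtain ⟨x, hx, rfl⟩ := hinv.symm ▸ hy
  obtain ⟨k, hk⟩ := mem_iUnion.mp (h.subset_iUnion hx)
  exact ⟨k, x, ⟨hx, hk⟩, hyl⟩

lemma IsMarkovCover.image_markovLimit (h : IsMarkovCover f Λ U) (hinv : f '' Λ = Λ) :
    f '' markovLimit f Λ U = markovLimit f Λ U := by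
  refine (image_subset_iff.mpr fun x hx => apply_mem_markovLimit hx).antisymm fun y hy => ?_
  obtain ⟨l, -, -, hl, -⟩ := hy 0
  obtain ⟨k, hkl⟩ := h.exists_markovEdge hinv l
  obtain ⟨x, hx, rfl⟩ := h.closure_subset_image k l hkl (subset_closure hl)
  exact ⟨x, mem_markovLimit_of_apply hkl hx hl hy, rfl⟩

/-- The branch over `closure (U l)` takes values in `U k`, so a limit of points of `U k` mapped
into `closure (U l)` does not reach the boundary of `U k`. -/
lemma IsMarkovCover.closure_inter_preimage_subset (h : IsMarkovCover f Λ U) (hf : Continuous f)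
    {k l : ι} (hkl : MarkovEdge f Λ U k l) :
    closure (U k ∩ f ⁻¹' U l) ⊆ U k ∩ f ⁻¹' closure (U l) := by
  intro x hx
  have hxk : x ∈ closure (U k) := closure_mono inter_subset_left hx
  have hfx : f x ∈ closure (U l) :=
    hf.closure_preimage_subset (U l) (closure_mono inter_subset_right hx)
  obtain ⟨u, hu, hux⟩ := h.closure_subset_image k l hkl hfx
  exact ⟨h.injOn_closure k (subset_closure hu) hxk hux ▸ hu, hfx⟩

lemma IsMarkovCover.isClosed_markovLimit [Finite ι] (h : IsMarkovCover f Λ U)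
    (hf : Continuous f) : IsClosed (markovLimit f Λ U) := by
  refine isClosed_of_closure_subset fun x hx => ?_
  have hstep (m : ℕ) :
      ∃ k l, MarkovEdge f Λ U k l ∧ f^[m] x ∈ U k ∧ f^[m + 1] x ∈ closure (U l) := by
    have hmaps : MapsTo f^[m] (markovLimit f Λ U)
        (⋃ e ∈ {e : ι × ι | MarkovEdge f Λ U e.1 e.2}, U e.1 ∩ f ⁻¹' U e.2) := fun y hy => by
      obtain ⟨k, l, hkl, hk, hl⟩ := hy m
      rw [Function.iterate_succ_apply'] at hl
      exact mem_biUnion (x := (k, l)) hkl ⟨hk, hl⟩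
    have hmx := hmaps.closure (hf.iterate m) hx
    rw [(toFinite _).closure_biUnion] at hmx
    obtain ⟨⟨k, l⟩, hkl, hmx⟩ := mem_iUnion₂.mp hmx
    obtain ⟨hk, hl⟩ := h.closure_inter_preimage_subset hf hkl hmx
    exact ⟨k, l, hkl, hk, by rwa [Function.iterate_succ_apply']⟩
  intro m
  obtain ⟨k, l, hkl, hk, hl⟩ := hstep m
  obtain ⟨l', -, -, hl', -⟩ := hstep (m + 1)
  exact ⟨k, l, hkl, hk, h.eq_of_mem hl hl' ▸ hl'⟩

lemma IsMarkovCover.exists_isOpen_isolating_markovLimit (h : IsMarkovCover f Λ U)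
    (hf : Continuous f) :
    ∃ V, IsOpen V ∧ markovLimit f Λ U ⊆ V ∧ ∀ x, (∀ m, f^[m] x ∈ V) → x ∈ markovLimit f Λ U := by
  refine ⟨⋃ (k) (l) (_ : MarkovEdge f Λ U k l), U k ∩ f ⁻¹' U l, ?_, ?_, ?_⟩
  · exact isOpen_iUnion fun k => isOpen_iUnion fun l => isOpen_iUnion fun _ =>
      (h.isOpen k).inter ((h.isOpen l).preimage hf)
  · intro x hx
    obtain ⟨k, l, hkl, hk, hl⟩ := hx 0
    simp only [mem_iUnion]
    exact ⟨k, l, hkl, hk, hl⟩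
  · intro x hx m
    have hm := hx m
    simp only [mem_iUnion] at hm
    obtain ⟨k, l, hkl, hk, hl⟩ := hm
    exact ⟨k, l, hkl, hk, by rwa [Function.iterate_succ_apply']⟩

end MarkovLimit

/-! ### The chordal metric -/

namespace RSphere

lemma isometry_embed : Isometry embed := fun _ _ => rfl

lemma eq_infty_or_exists_eq_ofC (x : RSphere) : x = infty ∨ ∃ z, x = ofC z := by
  rcases x with ⟨_ | z⟩
  exacts [Or.inl rfl, Or.inr ⟨z, rfl⟩]

lemma ofC_injective : Function.Injective ofC := fun z w h => by simpa [ofC] using h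

lemma ofC_ne_infty (z : ℂ) : ofC z ≠ infty := by simp [ofC, infty]

@[simp]
lemma toC_ofC (z : ℂ) : toC (ofC z) = z := rfl

lemma ofC_toC {x : RSphere} (hx : x ≠ infty) : ofC (toC x) = x := by
  obtain ⟨z, rfl⟩ := (eq_infty_or_exists_eq_ofC x).resolve_left hx
  rfl

@[simp]
lemma inv_infty : inv infty = ofC 0 := rfl

@[simp]
lemma inv_ofC_zero : inv (ofC 0) = infty := by simp [inv, elim, ofC]

lemma inv_ofC {z : ℂ} (hz : z ≠ 0) : inv (ofC z) = ofC z⁻¹ := by simp [inv, elim, ofC, hz]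

lemma inv_inv (x : RSphere) : inv (inv x) = x := by
  rcases eq_infty_or_exists_eq_ofC x with rfl | ⟨z, rfl⟩
  · simp
  · by_cases hz : z = 0
    · simp [hz]
    · rw [inv_ofC hz, inv_ofC (inv_ne_zero hz), _root_.inv_inv]

lemma dist_sq (x y : RSphere) : dist x y ^ 2 =
    ‖(embed x).fst - (embed y).fst‖ ^ 2 + ((embed x).snd - (embed y).snd) ^ 2 := by
  rw [← isometry_embed.dist_eq, dist_eq_norm, WithLp.prod_norm_sq_eq_of_L2]
  simp

lemma embed_ofC_fst (z : ℂ) : (embed (ofC z)).fst = (2 / (‖z‖ ^ 2 + 1) : ℝ) • z := rfl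

lemma embed_ofC_snd (z : ℂ) : (embed (ofC z)).snd = (‖z‖ ^ 2 - 1) / (‖z‖ ^ 2 + 1) := rfl

lemma embed_infty_fst : (embed infty).fst = 0 := rfl

lemma embed_infty_snd : (embed infty).snd = 1 := rfl

lemma one_sub_embed_ofC_snd (z : ℂ) : 1 - (embed (ofC z)).snd = 2 / (‖z‖ ^ 2 + 1) := by
  have hz : ‖z‖ ^ 2 + 1 ≠ 0 := by positivity
  rw [embed_ofC_snd]
  field_simp
  ring

lemma dist_ofC_sq (z w : ℂ) :
    dist (ofC z) (ofC w) ^ 2 = 4 * dist z w ^ 2 / ((‖z‖ ^ 2 + 1) * (‖w‖ ^ 2 + 1)) := by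
  have hz : ‖z‖ ^ 2 + 1 ≠ 0 := by positivity
  have hw : ‖w‖ ^ 2 + 1 ≠ 0 := by positivity
  rw [dist_sq, embed_ofC_fst, embed_ofC_fst, embed_ofC_snd, embed_ofC_snd, norm_sub_sq_real,
    norm_smul, norm_smul, inner_smul_left, inner_smul_right, dist_eq_norm, norm_sub_sq_real]
  simp only [Real.norm_eq_abs, mul_pow, sq_abs, RCLike.conj_to_real]
  field_simp
  ring

lemma dist_ofC_infty_sq (z : ℂ) : dist (ofC z) infty ^ 2 = 4 / (‖z‖ ^ 2 + 1) := by
  have hz : ‖z‖ ^ 2 + 1 ≠ 0 := by positivity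
  rw [dist_sq, embed_ofC_fst, embed_ofC_snd, embed_infty_fst, embed_infty_snd, sub_zero, norm_smul]
  simp only [Real.norm_eq_abs, mul_pow, sq_abs]
  field_simp
  ring

lemma dist_inv_ofC_inv_infty (z : ℂ) : dist (inv (ofC z)) (inv infty) = dist (ofC z) infty := by
  by_cases hz : z = 0
  · simp [hz, dist_comm]
  · have hz' : ‖z‖ ≠ 0 := norm_ne_zero_iff.mpr hz
    rw [← sq_eq_sq₀ dist_nonneg dist_nonneg, inv_ofC hz, inv_infty, dist_ofC_sq, dist_ofC_infty_sq,
      dist_zero_right, norm_inv, norm_zero]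
    field_simp
    ring

lemma dist_inv_ofC_infty (z : ℂ) : dist (inv (ofC z)) infty = dist (ofC z) (ofC 0) := by
  by_cases hz : z = 0
  · simp [hz]
  · have h := dist_inv_ofC_inv_infty z⁻¹
    rwa [← inv_ofC hz, inv_inv, inv_infty, eq_comm] at h

lemma dist_inv_ofC_inv_ofC {z w : ℂ} (hz : z ≠ 0) (hw : w ≠ 0) :
    dist (inv (ofC z)) (inv (ofC w)) = dist (ofC z) (ofC w) := by
  have hz' : ‖z‖ ≠ 0 := norm_ne_zero_iff.mpr hz
  have hw' : ‖w‖ ≠ 0 := norm_ne_zero_iff.mpr hw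
  rw [← sq_eq_sq₀ dist_nonneg dist_nonneg, inv_ofC hz, inv_ofC hw, dist_ofC_sq, dist_ofC_sq,
    dist_inv_inv₀ hz hw, norm_inv, norm_inv]
  field_simp
  ring

lemma isometry_inv : Isometry inv := by
  refine Isometry.of_dist_eq fun x y => ?_
  rcases eq_infty_or_exists_eq_ofC x with rfl | ⟨z, rfl⟩ <;>
    rcases eq_infty_or_exists_eq_ofC y with rfl | ⟨w, rfl⟩
  · simp
  · rw [dist_comm, dist_inv_ofC_inv_infty, dist_comm]
  · exact dist_inv_ofC_inv_infty z
  · by_cases hz : z = 0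
    · rw [hz, inv_ofC_zero, dist_comm, dist_inv_ofC_infty, dist_comm]
    by_cases hw : w = 0
    · rw [hw, inv_ofC_zero, dist_inv_ofC_infty]
    exact dist_inv_ofC_inv_ofC hz hw

lemma isHomeomorph_inv : IsHomeomorph inv :=
  isHomeomorph_iff_exists_inverse.mpr
    ⟨isometry_inv.continuous, inv, inv_inv, inv_inv, isometry_inv.continuous⟩

lemma continuous_ofC : Continuous ofC := by
  rw [isometry_embed.isEmbedding.continuous_iff]
  refine (WithLp.prod_continuous_toLp 2 ℂ ℝ).comp
    (f := fun z : ℂ => (((2 / (‖z‖ ^ 2 + 1) : ℝ) • z, (‖z‖ ^ 2 - 1) / (‖z‖ ^ 2 + 1)) : ℂ × ℝ)) ?_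
  have hne (z : ℂ) : ‖z‖ ^ 2 + 1 ≠ 0 := by positivity
  fun_prop (disch := exact hne _)

lemma toC_eq (x : RSphere) : toC x = (1 - (embed x).snd)⁻¹ • (embed x).fst := by
  rcases eq_infty_or_exists_eq_ofC x with rfl | ⟨z, rfl⟩
  · rw [embed_infty_fst, smul_zero]
    rfl
  · rw [one_sub_embed_ofC_snd, embed_ofC_fst, smul_smul, inv_mul_cancel₀ (by positivity), one_smul,
      toC_ofC]

lemma continuousAt_toC (z : ℂ) : ContinuousAt toC (ofC z) := by
  have hne : 1 - (embed (ofC z)).snd ≠ 0 := by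
    rw [one_sub_embed_ofC_snd]
    positivity
  have hembed := isometry_embed.continuous
  have hfst : Continuous fun x => (embed x).fst := by fun_prop
  have hsnd : Continuous fun x => (embed x).snd := by fun_prop
  rw [funext toC_eq]
  exact ((continuousAt_const.sub hsnd.continuousAt).inv₀ hne).smul hfst.continuousAt

lemma isOpenEmbedding_ofC : IsOpenEmbedding ofC := by
  refine .of_continuous_injective_isOpenMap continuous_ofC ofC_injective
    (isOpenMap_iff_nhds_le.mpr fun z s hs => ?_)
  have hnear : ∀ᶠ x in 𝓝 (ofC z), ofC (toC x) ∈ s :=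
    (continuousAt_toC z).eventually (p := fun w => ofC w ∈ s) hs
  filter_upwards [hnear, isOpen_ne.mem_nhds (ofC_ne_infty z)] with x hx hx'
  rwa [ofC_toC hx'] at hx

lemma exists_isOpenEmbedding_mem_range (x : RSphere) :
    ∃ φ : ℂ → RSphere, IsOpenEmbedding φ ∧ x ∈ range φ := by
  rcases eq_infty_or_exists_eq_ofC x with rfl | ⟨z, rfl⟩
  · exact ⟨inv ∘ ofC, isHomeomorph_inv.isOpenEmbedding.comp isOpenEmbedding_ofC, 0, by simp⟩
  · exact ⟨ofC, isOpenEmbedding_ofC, z, rfl⟩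

lemma univ_eq_image_closedBall_union :
    univ = ofC '' closedBall 0 1 ∪ inv '' (ofC '' closedBall 0 1) := by
  refine (eq_univ_of_forall fun x => ?_).symm
  rcases eq_infty_or_exists_eq_ofC x with rfl | ⟨z, rfl⟩
  · exact Or.inr ⟨ofC 0, ⟨0, by simp, rfl⟩, by simp⟩
  · rcases le_total ‖z‖ 1 with hz | hz
    · exact Or.inl ⟨z, by simpa using hz, rfl⟩
    · have hz0 : z ≠ 0 := norm_pos_iff.mp (by linarith)
      exact Or.inr ⟨ofC z⁻¹, ⟨z⁻¹, by simpa using inv_le_one_of_one_le₀ hz, rfl⟩,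
        by rw [← inv_ofC hz0, inv_inv]⟩

instance : Nonempty RSphere := ⟨infty⟩

instance : CompactSpace RSphere := by
  have hball : IsCompact (ofC '' closedBall 0 1) := (isCompact_closedBall 0 1).image continuous_ofC
  refine ⟨?_⟩
  rw [univ_eq_image_closedBall_union]
  exact hball.union (hball.image isometry_inv.continuous)

instance : LocallyConnectedSpace RSphere := by
  refine locallyConnectedSpace_iff_subsets_isOpen_isConnected.mpr fun x s hs => ?_
  obtain ⟨φ, hφ, z, rfl⟩ := exists_isOpenEmbedding_mem_range x
  obtain ⟨r, hr, hrs⟩ := Metric.mem_nhds_iff.mp (hφ.continuous.continuousAt.preimage_mem_nhds hs)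
  refine ⟨φ '' ball z r, image_subset_iff.mpr hrs, hφ.isOpenMap _ isOpen_ball,
    mem_image_of_mem φ (mem_ball_self hr), ?_⟩
  exact ((convex_ball z r).isConnected ⟨z, mem_ball_self hr⟩).image φ hφ.continuous.continuousOn

instance (x : RSphere) : (𝓝[≠] x).NeBot := by
  obtain ⟨φ, hφ, z, rfl⟩ := exists_isOpenEmbedding_mem_range x
  have hmap : Tendsto φ (𝓝[≠] z) (𝓝[≠] φ z) :=
    hφ.continuous.continuousWithinAt.tendsto_nhdsWithin fun w hw h => hw (hφ.injective h)
  exact hmap.neBot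

end RSphere

/-! ### The graph directed system of a Markov cover -/

section GraphDirectedSystem

variable {f : RSphere → RSphere} {Λ : Set RSphere}

lemma IsMarkovCover.isRepeller_markovLimit {ι : Type*} [Finite ι]
    {U : ι → Set RSphere} (h : IsMarkovCover f Λ U) (hf : Continuous f) (hinv : f '' Λ = Λ) :
    IsRepeller f (markovLimit f Λ U) :=
  ⟨(h.isClosed_markovLimit hf).isCompact, h.image_markovLimit hinv,
    h.exists_isOpen_isolating_markovLimit hf⟩

variable {n : ℕ} {U : Fin n → Set RSphere}

lemma IsMarkovCover.surjOn (h : IsMarkovCover f Λ U) {k l : Fin n}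
    (hkl : MarkovEdge f Λ U k l) : SurjOn f (U k) (closure (U l)) :=
  h.closure_subset_image k l hkl

lemma IsMarkovCover.injOn (h : IsMarkovCover f Λ U) (k : Fin n) : InjOn f (U k) :=
  (h.injOn_closure k).mono subset_closure

/-- The graph directed system of a Markov cover: the edges are the transitions realised by `Λ`,
and the branch along `k → l` is the inverse of `f` on `U k`. -/
def IsMarkovCover.gds (h : IsMarkovCover f Λ U) (hn : 0 < n) : GDS f where
  n := n
  npos := hn
  U := U
  edge := MarkovEdge f Λ U
  br k _ := Function.invFunOn f (U k)
  isOpen := h.isOpen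
  isConnected := h.isConnected
  disjClosure k l hkl := (h.disjoint_closure k l hkl).inter_eq
  mapsTo _ _ hkl := (h.surjOn hkl).mapsTo_invFunOn
  isBranch _ _ hkl := (h.surjOn hkl).rightInvOn_invFunOn
  bddDistortion := by
    obtain ⟨C, hC⟩ := (finite_range fun e : Fin n × Fin n =>
      distortionOn (Function.invFunOn f (U e.1)) (closure (U e.2))).bddAbove
    exact ⟨C, fun k l _ => hC (mem_range_self (k, l))⟩

lemma IsMarkovCover.exists_edge_of_mem_gdsCyl (h : IsMarkovCover f Λ U) (hn : 0 < n) {m : ℕ}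
    {x : RSphere} (hx : x ∈ gdsCyl (h.gds hn) (m + 1)) {j : ℕ} (hj : j ≤ m) :
    ∃ k l, MarkovEdge f Λ U k l ∧ f^[j] x ∈ U k ∧ f^[j + 1] x ∈ U l := by
  induction j generalizing m x with
  | zero =>
    simp only [gdsCyl, mem_iUnion] at hx
    obtain ⟨k, l, hkl, y, ⟨-, hyl⟩, rfl⟩ := hx
    have hyl' : y ∈ closure (U l) := subset_closure hyl
    refine ⟨k, l, hkl, (h.gds hn).mapsTo k l hkl hyl', ?_⟩
    rw [Function.iterate_one, (h.gds hn).isBranch k l hkl y hyl']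
    exact hyl
  | succ j ih =>
    obtain ⟨m, rfl⟩ := Nat.exists_eq_add_one.mpr (j.succ_pos.trans_le hj)
    rw [gdsCyl] at hx
    simp only [mem_iUnion] at hx
    obtain ⟨k, l, hkl, y, ⟨hy, hyl⟩, rfl⟩ := hx
    rw [Function.iterate_succ_apply, Function.iterate_succ_apply,
      (h.gds hn).isBranch k l hkl y (subset_closure hyl)]
    exact ih hy (Nat.le_of_succ_le_succ hj)

lemma IsMarkovCover.markovLimit_subset_gdsCyl (h : IsMarkovCover f Λ U) (hn : 0 < n) (m : ℕ) :
    markovLimit f Λ U ⊆ gdsCyl (h.gds hn) m := by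
  induction m with
  | zero => exact markovLimit_subset_iUnion
  | succ m ih =>
    intro x hx
    obtain ⟨k, l, hkl, hk, hl⟩ := hx 0
    simp only [gdsCyl, mem_iUnion]
    exact ⟨k, l, hkl, f x, ⟨ih (apply_mem_markovLimit hx), hl⟩,
      (h.injOn k).leftInvOn_invFunOn hk⟩

theorem IsMarkovCover.gdsLimit_gds (h : IsMarkovCover f Λ U) (hn : 0 < n) :
    gdsLimit (h.gds hn) = markovLimit f Λ U :=
  Subset.antisymm
    (fun _ hx m => h.exists_edge_of_mem_gdsCyl hn (mem_iInter.mp hx (m + 1)) le_rfl)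
    (subset_iInter (h.markovLimit_subset_gdsCyl hn))

lemma exists_gds_gdsLimit_eq_empty (f : RSphere → RSphere) : ∃ G : GDS f, gdsLimit G = ∅ := by
  obtain ⟨V, -, hV, -, hVconn⟩ := locallyConnectedSpace_iff_subsets_isOpen_isConnected.mp
    inferInstance RSphere.infty univ univ_mem
  let G : GDS f :=
    { n := 1
      npos := one_pos
      U := fun _ => V
      edge := fun _ _ => False
      br := fun _ _ => id
      isOpen := fun _ => hV
      isConnected := fun _ => hVconn
      disjClosure := fun k l hkl => (hkl (Subsingleton.elim k l)).elim
      mapsTo := fun _ _ h => h.elim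
      isBranch := fun _ _ h => h.elim
      bddDistortion := ⟨0, fun _ _ h => h.elim⟩ }
  exact ⟨G, subset_empty_iff.mp fun x hx => by simpa [gdsCyl, G] using mem_iInter.mp hx 1⟩

lemma isECR_empty (f : RSphere → RSphere) : IsECR f ∅ :=
  ⟨⟨1, one_pos, 2, one_lt_two, by simp⟩,
    ⟨isCompact_empty, image_empty f, ∅, isOpen_empty, subset_rfl, fun _ hx => hx 0⟩,
    exists_gds_gdsLimit_eq_empty f⟩

end GraphDirectedSystem

/-! ### Strict conformality and rational maps -/

section Conformal

open Asymptotics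

variable {X Y Z : Type*} [PseudoMetricSpace X] [PseudoMetricSpace Y] [PseudoMetricSpace Z]
  {g : X → Y} {x : X} {s t : ℝ}

/-- `g` is conformal at `x` with scaling factor `s`, in the strict sense: the distances of pairs
of points converging to `x` are multiplied by `s` up to an error of smaller order. -/
def StrictConformalAt (g : X → Y) (x : X) (s : ℝ) : Prop :=
  (fun p : X × X => dist (g p.1) (g p.2) - s * dist p.1 p.2) =o[𝓝 (x, x)] fun p => dist p.1 p.2

lemma StrictConformalAt.isBigO (h : StrictConformalAt g x s) :
    (fun p : X × X => dist (g p.1) (g p.2)) =O[𝓝 (x, x)] fun p => dist p.1 p.2 := by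
  refine ((IsLittleO.isBigO h).add (isBigO_const_mul_self s _ _)).congr_left fun p => ?_
  ring

lemma StrictConformalAt.isBigO_rev (h : StrictConformalAt g x s) (hs : s ≠ 0) :
    (fun p : X × X => dist p.1 p.2) =O[𝓝 (x, x)] fun p => dist (g p.1) (g p.2) := by
  have hadd := (IsLittleO.const_mul_right hs h).right_isBigO_add
  simp only [sub_add_cancel] at hadd
  exact (isBigO_self_const_mul hs _ _).trans hadd

lemma StrictConformalAt.congr {g' : X → Y} (h : StrictConformalAt g x s)
    (hg : g =ᶠ[𝓝 x] g') : StrictConformalAt g' x s := by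
  refine IsLittleO.congr' h ?_ EventuallyEq.rfl
  filter_upwards [hg.prod_inl_nhds x, hg.prod_inr_nhds x] with p hp₁ hp₂
  rw [hp₁, hp₂]

lemma StrictConformalAt.comp {h : Y → Z} (hh : StrictConformalAt h (g x) t)
    (hg : StrictConformalAt g x s) (hc : ContinuousAt g x) :
    StrictConformalAt (h ∘ g) x (t * s) := by
  have hT : Tendsto (fun p : X × X => (g p.1, g p.2)) (𝓝 (x, x)) (𝓝 (g x, g x)) := by
    rw [nhds_prod_eq, nhds_prod_eq]
    exact Tendsto.prodMap hc hc
  have hcomp := (hh.comp_tendsto hT).trans_isBigO hg.isBigO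
  refine (hcomp.add (hg.const_mul_left t)).congr_left fun p => ?_
  simp only [Function.comp_apply]
  ring

lemma StrictConformalAt.of_comp {h : Y → Z} (hhg : StrictConformalAt (h ∘ g) x t)
    (hg : StrictConformalAt g x s) (hs : s ≠ 0) (hmap : 𝓝 (g x) ≤ map g (𝓝 x)) :
    StrictConformalAt h (g x) (t / s) := by
  have hprod : 𝓝 (g x, g x) ≤ map (Prod.map g g) (𝓝 (x, x)) := by
    rw [nhds_prod_eq, nhds_prod_eq, ← prod_map_map_eq']
    exact prod_mono hmap hmap
  refine IsLittleO.mono ?_ hprod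
  rw [isLittleO_map]
  refine ((hhg.sub (hg.const_mul_left (t / s))).trans_isBigO (hg.isBigO_rev hs)).congr_left
    fun p => ?_
  simp only [Function.comp_apply, Prod.map]
  field_simp
  ring

lemma StrictConformalAt.tendsto_div {X : Type*} [MetricSpace X] {g : X → Y} {x : X}
    (h : StrictConformalAt g x s) :
    Tendsto (fun y => dist (g y) (g x) / dist y x) (𝓝[≠] x) (𝓝 s) := by
  have hT : Tendsto (fun y => (y, x)) (𝓝[≠] x) (𝓝 (x, x)) := by
    rw [nhds_prod_eq]
    exact (tendsto_id'.mpr nhdsWithin_le_nhds).prodMk tendsto_const_nhds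
  have herr : Tendsto (fun y => (dist (g y) (g x) - s * dist y x) / dist y x + s) (𝓝[≠] x)
      (𝓝 (0 + s)) := (h.comp_tendsto hT).tendsto_div_nhds_zero.add_const s
  rw [zero_add] at herr
  refine herr.congr' ?_
  filter_upwards [self_mem_nhdsWithin] with y hy
  have hyx : dist y x ≠ 0 := dist_ne_zero.mpr hy
  field_simp
  ring

lemma strictConformalAt_of_isometry (hg : Isometry g) (x : X) : StrictConformalAt g x 1 := by
  simp only [StrictConformalAt, hg.dist_eq, one_mul, sub_self]
  exact isLittleO_zero _ _

lemma strictConformalAt_of_hasStrictDerivAt {F : ℂ → ℂ} {d z : ℂ} (h : HasStrictDerivAt F d z) :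
    StrictConformalAt F z ‖d‖ := by
  simp only [StrictConformalAt, dist_eq_norm]
  refine IsLittleO.trans_le (IsBigO.trans_isLittleO (.of_bound' <| .of_forall fun p => ?_)
    h.isLittleO) fun p => (norm_norm _).ge
  simpa [mul_comm] using abs_norm_sub_norm_le (F p.1 - F p.2) ((p.1 - p.2) • d)

/-- `g` is conformal at `x`, with a scaling factor that may vanish, and it is open at `x` if the
factor does not vanish. This is what a holomorphic map between Riemann surfaces satisfies. -/
def ConformalOrCritical (g : X → Y) (x : X) : Prop :=
  ∃ s, StrictConformalAt g x s ∧ (s ≠ 0 → 𝓝 (g x) ≤ map g (𝓝 x))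

lemma ConformalOrCritical.congr {g' : X → Y} (h : ConformalOrCritical g x)
    (hg : g =ᶠ[𝓝 x] g') : ConformalOrCritical g' x := by
  obtain ⟨s, hconf, hopen⟩ := h
  refine ⟨s, hconf.congr hg, fun hs => ?_⟩
  rw [← hg.eq_of_nhds, ← map_congr hg]
  exact hopen hs

lemma ConformalOrCritical.comp {h : Y → Z} (hh : ConformalOrCritical h (g x))
    (hg : ConformalOrCritical g x) (hc : ContinuousAt g x) : ConformalOrCritical (h ∘ g) x := by
  obtain ⟨t, hhconf, hhopen⟩ := hh
  obtain ⟨s, hgconf, hgopen⟩ := hg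
  refine ⟨t * s, hhconf.comp hgconf hc, fun hts => ?_⟩
  rw [← map_map]
  exact (hhopen (left_ne_zero_of_mul hts)).trans (map_mono (hgopen (right_ne_zero_of_mul hts)))

lemma ConformalOrCritical.of_comp {h : Y → Z} (hhg : ConformalOrCritical (h ∘ g) x)
    (hg : StrictConformalAt g x s) (hs : s ≠ 0) (hmap : map g (𝓝 x) = 𝓝 (g x)) :
    ConformalOrCritical h (g x) := by
  obtain ⟨t, hconf, hopen⟩ := hhg
  refine ⟨t / s, hconf.of_comp hg hs hmap.ge, fun hts => ?_⟩
  rw [← hmap, map_map]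
  exact hopen (div_ne_zero_iff.mp hts).1

lemma conformalOrCritical_of_isometry (hg : Isometry g) (hopen : IsOpenMap g) (x : X) :
    ConformalOrCritical g x :=
  ⟨1, strictConformalAt_of_isometry hg x, fun _ => hopen.nhds_le x⟩

lemma conformalOrCritical_of_hasStrictDerivAt {F : ℂ → ℂ} {d z : ℂ}
    (h : HasStrictDerivAt F d z) : ConformalOrCritical F z :=
  ⟨‖d‖, strictConformalAt_of_hasStrictDerivAt h, fun hd =>
    (h.map_nhds_eq (norm_ne_zero_iff.mp hd)).ge⟩

end Conformal

lemma eventually_eval_ne_zero {K : Type*} [Field K] [TopologicalSpace K] [T1Space K]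
    {q : Polynomial K} (hq : q ≠ 0) (z : K) : ∀ᶠ u in 𝓝[≠] z, q.eval u ≠ 0 :=
  nhdsNE_le_cofinite z (Polynomial.finite_setOfPred_isRoot hq).compl_mem_cofinite

lemma eval_reflect {K : Type*} [Field K] {p : Polynomial K} {d : ℕ} (hp : p.natDegree ≤ d)
    {u : K} (hu : u ≠ 0) : (p.reflect d).eval u = p.eval u⁻¹ * u ^ d := by
  have := invertibleOfNonzero (inv_ne_zero hu)
  have h := Polynomial.eval₂_reflect_mul_pow (RingHom.id K) u⁻¹ d p hp
  simp only [invOf_eq_inv, inv_inv, Polynomial.eval₂_id] at h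
  rw [← h, mul_assoc, ← mul_pow, inv_mul_cancel₀ hu, one_pow, mul_one]

lemma eval_zero_reflect {R : Type*} [Semiring R] (p : Polynomial R) (d : ℕ) :
    (p.reflect d).eval 0 = p.coeff d := by
  rw [← Polynomial.coeff_zero_eq_eval_zero, Polynomial.coeff_reflect,
    Polynomial.revAt_le d.zero_le, Nat.sub_zero]

lemma eval_zero_reflect_ratDeg_ne_zero {p q : Polynomial ℂ} (hq : q ≠ 0) :
    (p.reflect (ratDeg p q)).eval 0 ≠ 0 ∨ (q.reflect (ratDeg p q)).eval 0 ≠ 0 := by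
  rw [eval_zero_reflect, eval_zero_reflect, ratDeg]
  rcases le_or_gt p.natDegree q.natDegree with hle | hlt
  · right
    rwa [max_eq_right hle, Polynomial.coeff_natDegree, Polynomial.leadingCoeff_ne_zero]
  · left
    rw [max_eq_left hlt.le, Polynomial.coeff_natDegree, Polynomial.leadingCoeff_ne_zero]
    exact Polynomial.ne_zero_of_natDegree_gt hlt

namespace RSphere

lemma dist_ofC_ofC (z w : ℂ) :
    dist (ofC z) (ofC w) = 2 / (√(‖z‖ ^ 2 + 1) * √(‖w‖ ^ 2 + 1)) * dist z w := by
  rw [← sq_eq_sq₀ dist_nonneg (by positivity), dist_ofC_sq, mul_pow, div_pow, mul_pow,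
    Real.sq_sqrt (by positivity), Real.sq_sqrt (by positivity)]
  ring

lemma strictConformalAt_ofC (z : ℂ) : StrictConformalAt ofC z (2 / (‖z‖ ^ 2 + 1)) := by
  have hne (w : ℂ) : √(‖w‖ ^ 2 + 1) ≠ 0 := by positivity
  have hcont : Continuous fun p : ℂ × ℂ =>
      2 / (√(‖p.1‖ ^ 2 + 1) * √(‖p.2‖ ^ 2 + 1)) - 2 / (‖z‖ ^ 2 + 1) :=
    (continuous_const.div (by fun_prop) fun p => mul_ne_zero (hne _) (hne _)).sub
      continuous_const
  have hzero : Tendsto (fun p : ℂ × ℂ =>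
      2 / (√(‖p.1‖ ^ 2 + 1) * √(‖p.2‖ ^ 2 + 1)) - 2 / (‖z‖ ^ 2 + 1)) (𝓝 (z, z)) (𝓝 0) := by
    convert hcont.tendsto (z, z) using 2
    simp only
    rw [Real.mul_self_sqrt (by positivity), sub_self]
  have hmul := ((Asymptotics.isLittleO_one_iff ℝ).mpr hzero).mul_isBigO
    (Asymptotics.isBigO_refl (fun p : ℂ × ℂ => dist p.1 p.2) _)
  simp only [one_mul] at hmul
  refine hmul.congr_left fun p => ?_
  rw [dist_ofC_ofC, sub_mul]

lemma conformalOrCritical_ofC (z : ℂ) : ConformalOrCritical ofC z :=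
  ⟨_, strictConformalAt_ofC z, fun _ => (isOpenEmbedding_ofC.map_nhds_eq z).ge⟩

lemma conformalOrCritical_inv (x : RSphere) : ConformalOrCritical inv x :=
  conformalOrCritical_of_isometry isometry_inv isHomeomorph_inv.isOpenMap x

section RationalChart

variable {g : RSphere → RSphere} {p q : Polynomial ℂ} {z : ℂ}

lemma conformalOrCritical_ofC_of_eval_ne_zero (hg : ContinuousAt g (ofC z)) (hz : q.eval z ≠ 0)
    (h : ∀ᶠ u in 𝓝[≠] z, g (ofC u) = ofC (p.eval u / q.eval u)) :
    ConformalOrCritical g (ofC z) := by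
  have hderiv : HasStrictDerivAt (fun u => p.eval u / q.eval u) _ z :=
    (p.hasStrictDerivAt z).fun_div (q.hasStrictDerivAt z) hz
  have hcont : ContinuousAt (fun u => p.eval u / q.eval u) z := hderiv.hasDerivAt.continuousAt
  have hconf : ConformalOrCritical (ofC ∘ fun u => p.eval u / q.eval u) z :=
    (conformalOrCritical_ofC _).comp (conformalOrCritical_of_hasStrictDerivAt hderiv) hcont
  have heq : (ofC ∘ fun u => p.eval u / q.eval u) =ᶠ[𝓝 z] g ∘ ofC := by
    refine ((continuous_ofC.continuousAt.comp hcont).eventuallyEq_nhds_iff_eventuallyEq_nhdsNE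
      (hg.comp continuous_ofC.continuousAt)).mp ?_
    filter_upwards [h] with u hu using hu.symm
  exact (hconf.congr heq).of_comp (strictConformalAt_ofC z) (by positivity)
    (isOpenEmbedding_ofC.map_nhds_eq z)

/-- At a pole, `1 / g = q / p` is conformal by the previous lemma. -/
lemma conformalOrCritical_ofC_of_eventually (hg : ContinuousAt g (ofC z)) (hq : q ≠ 0)
    (hz : p.eval z ≠ 0 ∨ q.eval z ≠ 0)
    (h : ∀ᶠ u in 𝓝[≠] z, g (ofC u) = ofC (p.eval u / q.eval u)) :
    ConformalOrCritical g (ofC z) := by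
  by_cases hqz : q.eval z = 0
  · have hpz : p.eval z ≠ 0 := hz.resolve_right (not_not.mpr hqz)
    have hp : p ≠ 0 := by
      rintro rfl
      exact hpz Polynomial.eval_zero
    have hinvg : ContinuousAt (inv ∘ g) (ofC z) := isometry_inv.continuous.continuousAt.comp hg
    have hconf : ConformalOrCritical (inv ∘ g) (ofC z) := by
      refine conformalOrCritical_ofC_of_eval_ne_zero hinvg hpz (p := q) ?_
      filter_upwards [h, eventually_eval_ne_zero hp z, eventually_eval_ne_zero hq z]
        with u hu hpu hqu
      rw [Function.comp_apply, hu, inv_ofC (div_ne_zero hpu hqu), inv_div]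
    exact ((conformalOrCritical_inv _).comp hconf hinvg).congr
      (Eventually.of_forall fun y => inv_inv _)
  · exact conformalOrCritical_ofC_of_eval_ne_zero hg hqz h

end RationalChart

end RSphere

section RationalMap

open RSphere

variable {f : RSphere → RSphere} {p q : Polynomial ℂ}

lemma IsRationalMap.right_ne_zero (hf : IsRationalMap f p q) (hdeg : ratDeg p q ≠ 0) :
    q ≠ 0 := by
  rintro rfl
  have hp := Polynomial.natDegree_eq_zero_of_isUnit (isCoprime_zero_right.mp hf.coprime)
  simp [ratDeg, hp] at hdeg

lemma IsRationalMap.conformalOrCritical_ofC (hf : IsRationalMap f p q) (hq : q ≠ 0) (z : ℂ) :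
    ConformalOrCritical f (ofC z) := by
  refine conformalOrCritical_ofC_of_eventually hf.continuous.continuousAt hq
    (hf.coprime.map (Polynomial.evalRingHom z)).ne_zero_or_ne_zero ?_
  filter_upwards [eventually_eval_ne_zero hq z] with u hu using hf.eval u hu

/-- In the chart `1 / u` at infinity, `p / q` becomes the quotient of the reflected
polynomials. -/
lemma IsRationalMap.conformalOrCritical_infty (hf : IsRationalMap f p q) (hq : q ≠ 0) :
    ConformalOrCritical f infty := by
  have hqd : q.reflect (ratDeg p q) ≠ 0 := by simpa using hq
  have hconf : ConformalOrCritical (f ∘ inv) (ofC 0) := by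
    refine conformalOrCritical_ofC_of_eventually (p := p.reflect (ratDeg p q))
      (hf.continuous.comp RSphere.isometry_inv.continuous).continuousAt hqd
      (eval_zero_reflect_ratDeg_ne_zero hq) ?_
    filter_upwards [eventually_eval_ne_zero hqd 0, self_mem_nhdsWithin] with u hqu hu
    replace hu : u ≠ 0 := hu
    have hp := eval_reflect (le_max_left p.natDegree q.natDegree) hu
    have hq := eval_reflect (le_max_right p.natDegree q.natDegree) hu
    rw [ratDeg] at hqu ⊢
    rw [hq] at hqu
    rw [hp, hq, Function.comp_apply, inv_ofC hu, hf.eval _ (left_ne_zero_of_mul hqu),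
      mul_div_mul_right _ _ (pow_ne_zero _ hu)]
  have hinf := hconf.of_comp (strictConformalAt_of_isometry RSphere.isometry_inv _) one_ne_zero
    (isHomeomorph_inv.isOpenEmbedding.map_nhds_eq _)
  rwa [inv_ofC_zero] at hinf

theorem IsRationalMap.conformalOrCritical (hf : IsRationalMap f p q) (hq : q ≠ 0) (x : RSphere) :
    ConformalOrCritical f x := by
  rcases eq_infty_or_exists_eq_ofC x with rfl | ⟨z, rfl⟩
  exacts [hf.conformalOrCritical_infty hq, hf.conformalOrCritical_ofC hq z]

end RationalMap

/-! ### The spherical derivative -/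

section SphericalDerivative

variable {f g : RSphere → RSphere} {Λ : Set RSphere} {x : RSphere} {a : ℝ}

lemma StrictConformalAt.sphDeriv_eq {s : ℝ} (h : StrictConformalAt g x s) : sphDeriv g x = s :=
  h.tendsto_div.limsup_eq

lemma ConformalOrCritical.strictConformalAt (h : ConformalOrCritical g x) :
    StrictConformalAt g x (sphDeriv g x) := by
  obtain ⟨s, hconf, -⟩ := h
  rwa [hconf.sphDeriv_eq]

lemma ConformalOrCritical.nhds_le_map (h : ConformalOrCritical g x) (hx : sphDeriv g x ≠ 0) :
    𝓝 (g x) ≤ map g (𝓝 x) := by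
  obtain ⟨s, hconf, hopen⟩ := h
  exact hopen (hconf.sphDeriv_eq ▸ hx)

lemma ConformalOrCritical.tendsto_div (h : ConformalOrCritical g x) :
    Tendsto (fun y => dist (g y) (g x) / dist y x) (𝓝[≠] x) (𝓝 (sphDeriv g x)) :=
  h.strictConformalAt.tendsto_div

lemma ConformalOrCritical.sphDeriv_nonneg (h : ConformalOrCritical g x) : 0 ≤ sphDeriv g x :=
  ge_of_tendsto' h.tendsto_div fun _ => by positivity

lemma ConformalOrCritical.sphDeriv_comp {h : RSphere → RSphere}
    (hh : ConformalOrCritical h (g x)) (hg : ConformalOrCritical g x) (hc : ContinuousAt g x) :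
    sphDeriv (h ∘ g) x = sphDeriv h (g x) * sphDeriv g x :=
  (hh.strictConformalAt.comp hg.strictConformalAt hc).sphDeriv_eq

lemma ConformalOrCritical.sphDeriv_le (h : ConformalOrCritical g x)
    (ha : ∀ᶠ y in 𝓝 x, dist (g y) (g x) ≤ a * dist y x) : sphDeriv g x ≤ a := by
  refine le_of_tendsto h.tendsto_div ?_
  filter_upwards [nhdsWithin_le_nhds ha, self_mem_nhdsWithin] with y hy hyx
  exact (div_le_iff₀ (dist_pos.mpr hyx)).mpr hy

lemma ConformalOrCritical.le_sphDeriv (h : ConformalOrCritical g x)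
    (ha : ∀ᶠ y in 𝓝 x, a * dist y x ≤ dist (g y) (g x)) : a ≤ sphDeriv g x := by
  refine ge_of_tendsto h.tendsto_div ?_
  filter_upwards [nhdsWithin_le_nhds ha, self_mem_nhdsWithin] with y hy hyx
  exact (le_div_iff₀ (dist_pos.mpr hyx)).mpr hy

lemma ConformalOrCritical.eventually_le_dist (h : ConformalOrCritical g x)
    (ha : a < sphDeriv g x) :
    ∀ᶠ p : RSphere × RSphere in 𝓝 (x, x), a * dist p.1 p.2 ≤ dist (g p.1) (g p.2) := by
  filter_upwards [h.strictConformalAt.bound (sub_pos.mpr ha)] with p hp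
  rw [Real.norm_eq_abs, Real.norm_of_nonneg dist_nonneg] at hp
  linarith [(abs_le.mp hp).1]

lemma ConformalOrCritical.eventually_dist_le (h : ConformalOrCritical g x)
    (ha : sphDeriv g x < a) :
    ∀ᶠ p : RSphere × RSphere in 𝓝 (x, x), dist (g p.1) (g p.2) ≤ a * dist p.1 p.2 := by
  filter_upwards [h.strictConformalAt.bound (sub_pos.mpr ha)] with p hp
  rw [Real.norm_eq_abs, Real.norm_of_nonneg dist_nonneg] at hp
  linarith [(abs_le.mp hp).2]

lemma eventually_eventually_nhds_of_prod {X : Type*} [TopologicalSpace X] {x : X}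
    {P : X × X → Prop} (h : ∀ᶠ w in 𝓝 (x, x), P w) : ∀ᶠ y in 𝓝 x, ∀ᶠ z in 𝓝 y, P (z, y) := by
  have hdiag : Tendsto (fun y : X => (y, y)) (𝓝 x) (𝓝 (x, x)) :=
    (continuous_id.prodMk continuous_id).tendsto x
  filter_upwards [hdiag.eventually h.eventually_nhds] with y hy
  exact (Continuous.prodMk_left y).tendsto y |>.eventually hy

theorem continuous_sphDeriv (hC : ∀ x, ConformalOrCritical g x) : Continuous (sphDeriv g) := by
  refine continuous_iff_continuousAt.mpr fun x => tendsto_order.mpr ⟨fun a ha => ?_, fun a ha => ?_⟩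
  · obtain ⟨b, hab, hb⟩ := exists_between ha
    filter_upwards [eventually_eventually_nhds_of_prod ((hC x).eventually_le_dist hb)] with y hy
    exact hab.trans_le ((hC y).le_sphDeriv hy)
  · obtain ⟨b, hb, hba⟩ := exists_between ha
    filter_upwards [eventually_eventually_nhds_of_prod ((hC x).eventually_dist_le hb)] with y hy
    exact ((hC y).sphDeriv_le hy).trans_lt hba

theorem exists_locallyExpanding (hC : ∀ x ∈ Λ, ConformalOrCritical g x) (hΛ : IsCompact Λ)
    (ha : ∀ x ∈ Λ, a < sphDeriv g x) : ∃ r > 0, LocallyExpanding g Λ a r := by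
  have hlocal : ∀ x ∈ Λ, ∃ r > 0, ∀ y ∈ ball x r, ∀ z ∈ ball x r,
      a * dist y z ≤ dist (g y) (g z) := fun x hx => by
    obtain ⟨r, hr, h⟩ :=
      Metric.eventually_nhds_iff_ball.mp ((hC x hx).eventually_le_dist (ha x hx))
    rw [← ball_prod_same] at h
    exact ⟨r, hr, fun y hy z hz => h (y, z) ⟨hy, hz⟩⟩
  choose! ρ hρ hexp using hlocal
  obtain ⟨r, hr, hleb⟩ := lebesgue_number_lemma_of_metric
    (c := fun x : Λ => ball (x : RSphere) (ρ x)) hΛ (fun _ => isOpen_ball)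
    fun x hx => mem_iUnion.mpr ⟨⟨x, hx⟩, mem_ball_self (hρ x hx)⟩
  refine ⟨r, hr, fun x hx y hy z hz => ?_⟩
  obtain ⟨w, hw⟩ := hleb x hx
  exact hexp w w.2 y (hw hy) z (hw hz)

lemma conformalOrCritical_iterate (hf : Continuous f) (hC : ∀ x, ConformalOrCritical f x)
    (m : ℕ) (x : RSphere) : ConformalOrCritical f^[m] x := by
  induction m generalizing x with
  | zero => exact conformalOrCritical_of_isometry isometry_id IsOpenMap.id x
  | succ m ih => exact (ih (f x)).comp (hC x) hf.continuousAt

lemma sphDeriv_iterate_zero (f : RSphere → RSphere) (x : RSphere) : sphDeriv f^[0] x = 1 :=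
  (strictConformalAt_of_isometry isometry_id x).sphDeriv_eq

lemma sphDeriv_iterate_add (hf : Continuous f) (hC : ∀ x, ConformalOrCritical f x) (m n : ℕ)
    (x : RSphere) : sphDeriv f^[m + n] x = sphDeriv f^[m] (f^[n] x) * sphDeriv f^[n] x := by
  rw [Function.iterate_add]
  exact (conformalOrCritical_iterate hf hC m _).sphDeriv_comp
    (conformalOrCritical_iterate hf hC n x) (hf.iterate n).continuousAt

lemma sphDeriv_iterate_le_pow (hf : Continuous f) (hC : ∀ x, ConformalOrCritical f x)
    (ha : ∀ x, sphDeriv f x ≤ a) (m : ℕ) (x : RSphere) : sphDeriv f^[m] x ≤ a ^ m := by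
  induction m generalizing x with
  | zero => rw [sphDeriv_iterate_zero, pow_zero]
  | succ m ih =>
    have ha₀ : 0 ≤ a := (hC x).sphDeriv_nonneg.trans (ha x)
    rw [sphDeriv_iterate_add hf hC, pow_succ]
    exact mul_le_mul (ih _) (ha x) (hC x).sphDeriv_nonneg (pow_nonneg ha₀ m)

lemma pow_le_sphDeriv_iterate (hf : Continuous f) (hC : ∀ x, ConformalOrCritical f x)
    (hinv : MapsTo f Λ Λ) (ha₀ : 0 ≤ a) (ha : ∀ x ∈ Λ, a ≤ sphDeriv f x) (m : ℕ) (hx : x ∈ Λ) :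
    a ^ m ≤ sphDeriv f^[m] x := by
  induction m generalizing x with
  | zero => rw [sphDeriv_iterate_zero, pow_zero]
  | succ m ih =>
    rw [sphDeriv_iterate_add hf hC, pow_succ]
    exact mul_le_mul (ih (hinv hx)) (ha x hx) ha₀
      (conformalOrCritical_iterate hf hC m _).sphDeriv_nonneg

lemma exists_sphDeriv_le (hC : ∀ x, ConformalOrCritical f x) :
    ∃ L ≥ 1, ∀ x, sphDeriv f x ≤ L := by
  obtain ⟨L, hL⟩ := (isCompact_range (continuous_sphDeriv hC)).bddAbove
  exact ⟨max 1 L, le_max_left _ _, fun x => (hL (mem_range_self x)).trans (le_max_right _ _)⟩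

/-- The derivative of `f^[m]` is compared with that of `f^[N * k]` for the first multiple
`N * k > m`, which costs at most `N` further applications of `f`. -/
theorem expandingOn_of_iterate (hf : Continuous f) (hC : ∀ x, ConformalOrCritical f x)
    (hinv : MapsTo f Λ Λ) {N : ℕ} (hN : 0 < N) (ha : 1 < a)
    (h : ∀ x ∈ Λ, a ≤ sphDeriv f^[N] x) : ExpandingOn f Λ := by
  obtain ⟨L, hL₁, hL⟩ := exists_sphDeriv_le hC
  have ha₀ : 0 ≤ a := by linarith
  have hroot : 1 < a ^ (N : ℝ)⁻¹ := Real.one_lt_rpow ha (by positivity)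
  refine ⟨(L ^ N)⁻¹, by positivity, a ^ (N : ℝ)⁻¹, hroot, fun x hx m _ => ?_⟩
  let k := m / N + 1
  have hmk : m ≤ N * k := (Nat.lt_mul_div_succ m hN).le
  have hkN : N * k - m ≤ N := by
    have := Nat.mul_div_le m N
    have : N * k = N * (m / N) + N := Nat.mul_succ N _
    lia
  rw [inv_mul_le_iff₀ (by positivity)]
  calc (a ^ (N : ℝ)⁻¹) ^ m ≤ (a ^ (N : ℝ)⁻¹) ^ (N * k) := pow_le_pow_right₀ hroot.le hmk
    _ = a ^ k := by rw [pow_mul, Real.rpow_inv_natCast_pow ha₀ hN.ne']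
    _ ≤ sphDeriv f^[N * k] x := by
      rw [Function.iterate_mul]
      exact pow_le_sphDeriv_iterate (hf.iterate N) (conformalOrCritical_iterate hf hC N)
        (hinv.iterate N) ha₀ h k hx
    _ = sphDeriv f^[N * k - m] (f^[m] x) * sphDeriv f^[m] x := by
      rw [← sphDeriv_iterate_add hf hC, Nat.sub_add_cancel hmk]
    _ ≤ L ^ N * sphDeriv f^[m] x := by
      have hle := (sphDeriv_iterate_le_pow hf hC hL (N * k - m) (f^[m] x)).trans
        (pow_le_pow_right₀ hL₁ hkN)
      exact mul_le_mul_of_nonneg_right hle (conformalOrCritical_iterate hf hC m x).sphDeriv_nonneg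

lemma ExpandingOn.sphDeriv_ne_zero (h : ExpandingOn f Λ) (hx : x ∈ Λ) : sphDeriv f x ≠ 0 := by
  obtain ⟨c, hc, l, hl, hexp⟩ := h
  have hpos : 0 < c * l ^ 1 := by positivity
  exact (hpos.trans_le (hexp x hx 1 le_rfl)).ne'

lemma ExpandingOn.exists_lt_sphDeriv_iterate (h : ExpandingOn f Λ) (a : ℝ) :
    ∃ N > 0, ∀ x ∈ Λ, a < sphDeriv f^[N] x := by
  obtain ⟨c, hc, l, hl, hexp⟩ := h
  have hlarge := ((tendsto_pow_atTop_atTop_of_one_lt hl).const_mul_atTop hc).eventually_gt_atTop a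
  obtain ⟨N, hNa, hN⟩ := (hlarge.and (eventually_gt_atTop 0)).exists
  exact ⟨N, hN, fun x hx => hNa.trans_le (hexp x hx N hN)⟩

end SphericalDerivative

section Conclusion

variable {f : RSphere → RSphere} {Λ : Set RSphere}

theorem exists_isMarkovCover_subset_expandingOn_markovLimit (hf : Continuous f)
    (hconf : ∀ x, ConformalOrCritical f x) (hcomp : IsCompact Λ) (htd : IsTotallyDisconnected Λ)
    (hinv : MapsTo f Λ Λ) (hexp : ExpandingOn f Λ) {O : Set RSphere} (hO : IsOpen O)
    (hΛO : Λ ⊆ O) :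
    ∃ (n : ℕ) (U : Fin n → Set RSphere), IsMarkovCover f Λ U ∧ ⋃ k, U k ⊆ O ∧
      ExpandingOn f (markovLimit f Λ U) := by
  obtain ⟨N, hN, hderiv⟩ := hexp.exists_lt_sphDeriv_iterate 2
  have hconfN := conformalOrCritical_iterate hf hconf N
  obtain ⟨r, hr, hloc⟩ := exists_locallyExpanding (fun x _ => hconfN x) hcomp hderiv
  have hinj (x) (hx : x ∈ Λ) : InjOn f (ball x r) := by
    have hinjN := hloc.injOn two_pos hx
    rw [← Nat.sub_add_cancel hN, Function.iterate_succ] at hinjN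
    exact hinjN.of_comp
  obtain ⟨n, U, hU, hUO⟩ := exists_isMarkovCover hf hcomp htd hinv hr
    (hloc.uniformlyExpansiveOn one_lt_two hinv) hinj
    (fun x hx => (hconf x).nhds_le_map (hexp.sphDeriv_ne_zero hx))
    (hO.inter ((continuous_sphDeriv hconfN).isOpen_preimage _ isOpen_Ioi))
    (subset_inter hΛO hderiv)
  refine ⟨n, U, hU, hUO.trans inter_subset_left, ?_⟩
  exact expandingOn_of_iterate hf hconf (fun x hx => apply_mem_markovLimit hx) hN one_lt_two
    fun x hx => (hUO (markovLimit_subset_iUnion hx)).2.le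

theorem exists_isECR_superset_subset (hf : Continuous f) (hconf : ∀ x, ConformalOrCritical f x)
    (hcomp : IsCompact Λ) (htd : IsTotallyDisconnected Λ) (hinv : f '' Λ = Λ)
    (hexp : ExpandingOn f Λ) {O : Set RSphere} (hO : IsOpen O) (hΛO : Λ ⊆ O) :
    ∃ Λ', IsECR f Λ' ∧ Λ ⊆ Λ' ∧ Λ' ⊆ O := by
  rcases Λ.eq_empty_or_nonempty with rfl | ⟨x, hx⟩
  · exact ⟨∅, isECR_empty f, subset_rfl, empty_subset O⟩
  have hmaps : MapsTo f Λ Λ := mapsTo_iff_image_subset.mpr hinv.subset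
  obtain ⟨n, U, hU, hUO, hexpU⟩ :=
    exists_isMarkovCover_subset_expandingOn_markovLimit hf hconf hcomp htd hmaps hexp hO hΛO
  obtain ⟨k, -⟩ := mem_iUnion.mp (hU.subset_iUnion hx)
  exact ⟨markovLimit f Λ U, ⟨hexpU, hU.isRepeller_markovLimit hf hinv, _, hU.gdsLimit_gds k.pos⟩,
    subset_markovLimit hmaps hU.subset_iUnion, markovLimit_subset_iUnion.trans hUO⟩

theorem cantor_expanding_subset_ECR_general (hf : Continuous f)
    (hconf : ∀ x, ConformalOrCritical f x) (hcomp : IsCompact Λ) (hinv : f '' Λ = Λ)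
    (hexp : ExpandingOn f Λ) (htd : IsTotallyDisconnected Λ) :
    (∀ U : Set RSphere, IsOpen U → Λ ⊆ U →
      ∃ G : GDS f, Λ ⊆ gdsLimit G ∧ gdsLimit G ⊆ U) ∧
    ∃ Λ' : Set RSphere, IsECR f Λ' ∧ Λ ⊆ Λ' := by
  refine ⟨fun U hU hΛU => ?_, ?_⟩
  · obtain ⟨_, ⟨-, -, G, rfl⟩, hΛG, hGU⟩ :=
      exists_isECR_superset_subset hf hconf hcomp htd hinv hexp hU hΛU
    exact ⟨G, hΛG, hGU⟩
  · obtain ⟨Λ', hΛ', hΛΛ', -⟩ :=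
      exists_isECR_superset_subset hf hconf hcomp htd hinv hexp isOpen_univ (subset_univ Λ)
    exact ⟨Λ', hΛ', hΛΛ'⟩

end Conclusion

/-- **Lemma (expanding Cantor sets sit inside ECRs).**
If `Λ ⊆ J` is an `f`-invariant compact uniformly expanding Cantor set, then `Λ` is
contained in the limit set of a GDS satisfying the strong separation condition with
respect to `f`, and this limit set can be chosen inside any given neighbourhood of `Λ`.
In particular `Λ` is contained in an `f`-expanding Cantor repeller. -/
theorem cantor_expanding_subset_ECR (f : RSphere → RSphere) (p q : Polynomial ℂ)
    (hf : IsRationalMap f p q) (hdeg : 2 ≤ ratDeg p q)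
    (Λ : Set RSphere) (hΛJ : Λ ⊆ juliaSet f) (hcomp : IsCompact Λ)
    (hinv : f '' Λ = Λ) (hexp : ExpandingOn f Λ) (hcantor : IsCantorSet Λ) :
    (∀ U : Set RSphere, IsOpen U → Λ ⊆ U →
      ∃ G : GDS f, Λ ⊆ gdsLimit G ∧ gdsLimit G ⊆ U) ∧
    ∃ Λ' : Set RSphere, IsECR f Λ' ∧ Λ ⊆ Λ' :=
  cantor_expanding_subset_ECR_general hf.continuous
    (hf.conformalOrCritical (hf.right_ne_zero (by lia))) hcomp hinv hexp hcantor.2.2
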